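/- arXiv:1906.03170 — 6 statements merged into one kernel-verified Lean document; each statement's English description precedes it below -/
import Mathlib

section
/- Let X ⊆ ℤⁿ be a digital image and k ≥ 3. The partial projection ρᶜ_k : S(X,k) → S(X,k−1) is well defined (takes values in S(X,k−1)) and is continuous: whenever y ∼ y' in S(X,k), then ρᶜ_k(y) ∼ ρᶜ_k(y') in S(X,k−1). -/
open Set

/-- Adjacency of points in `ℤⁿ`: all coordinates differ by at most 1. -/
def adj {n : ℕ} (x y : Fin n → ℤ) : Prop := ∀ i, |x i - y i| ≤ 1

/-- The `k`-subdivision of a digital image `X ⊆ ℤⁿ`. -/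
def Subdiv {n : ℕ} (X : Set (Fin n → ℤ)) (k : ℤ) : Set (Fin n → ℤ) :=
  { y | (fun i => (y i).fdiv k) ∈ X }

/-- One coordinate of the partial projection `ρᶜ_k`: the point `k*x + j`
(with `0 ≤ j ≤ k-1`) is sent to `(k-1)*x + j` if `j ≤ ⌊k/2⌋ - 1`, and to
`(k-1)*x + j - 1` if `⌊k/2⌋ ≤ j ≤ k-1`. -/
def rhoC1 (k y : ℤ) : ℤ :=
  if y % k ≤ k / 2 - 1 then (k - 1) * (y.fdiv k) + y % k
  else (k - 1) * (y.fdiv k) + y % k - 1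

/-- The partial projection `ρᶜ_k : S(X,k) → S(X,k-1)`, defined coordinatewise. -/
def rhoC {n : ℕ} (k : ℤ) (y : Fin n → ℤ) : Fin n → ℤ := fun i => rhoC1 k (y i)

/-!
Within each block `{k * x, …, k * x + k - 1}` the map `ρᶜ_k` identifies the points `j = ⌊k/2⌋ - 1`
and `j = ⌊k/2⌋` and shifts the rest into place. It therefore sends the block over `x` onto the
block of length `k - 1` over `x`, and since one point is lost per block, on each coordinate it is
`y ↦ y - ⌊(y - ⌊k/2⌋) / k⌋ - 1`. As `y` grows by one this floor grows by `0` or `1`, so the map is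
nonexpansive.
-/

/-- The standard projection `ρ_k : ℤⁿ → ℤⁿ`, on all of `ℤⁿ` rather than only on `S(X,k)`, so that
`S(X,k)` is the preimage of `X`; that `ρᶜ_k` lands in `S(X,k-1)` is then `ρ_{k-1} ∘ ρᶜ_k = ρ_k`. -/
def standardProj {n : ℕ} (k : ℤ) (y : Fin n → ℤ) : Fin n → ℤ := fun i => (y i).fdiv k

theorem mem_Subdiv_iff {n : ℕ} {X : Set (Fin n → ℤ)} {k : ℤ} {y : Fin n → ℤ} :
    y ∈ Subdiv X k ↔ standardProj k y ∈ X :=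
  Iff.rfl

theorem rhoC1_fdiv {k : ℤ} (hk : 2 ≤ k) (y : ℤ) : (rhoC1 k y).fdiv (k - 1) = y.fdiv k := by
  have hmod_nonneg : 0 ≤ y % k := Int.emod_nonneg y (by omega)
  have hmod_lt : y % k < k := Int.emod_lt_of_pos y (by omega)
  rw [Int.fdiv_eq_ediv_of_nonneg _ (by omega : 0 ≤ k - 1), Int.ediv_eq_iff_of_pos (by omega),
    mul_comm, rhoC1]
  split_ifs <;> constructor <;> omega

theorem standardProj_rhoC {n : ℕ} {k : ℤ} (hk : 2 ≤ k) (y : Fin n → ℤ) :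
    standardProj (k - 1) (rhoC k y) = standardProj k y :=
  funext fun i => rhoC1_fdiv hk (y i)

theorem mapsTo_rhoC_Subdiv {n : ℕ} (X : Set (Fin n → ℤ)) {k : ℤ} (hk : 2 ≤ k) :
    MapsTo (rhoC k) (Subdiv X k) (Subdiv X (k - 1)) := fun y hy => by
  rwa [mem_Subdiv_iff, standardProj_rhoC hk, ← mem_Subdiv_iff]

theorem rhoC1_eq_sub_ediv {k : ℤ} (hk : 0 < k) (y : ℤ) :
    rhoC1 k y = y - (y - k / 2) / k - 1 := by
  have hmod_nonneg : 0 ≤ y % k := Int.emod_nonneg y hk.ne'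
  have hmod_lt : y % k < k := Int.emod_lt_of_pos y hk
  have hdecomp : k * (y / k) + y % k = y := Int.mul_ediv_add_emod y k
  have hhalf_nonneg : 0 ≤ k / 2 := Int.ediv_nonneg hk.le zero_le_two
  have hhalf_le : k / 2 ≤ k := Int.ediv_le_self 2 hk.le
  have hfloor : (y - k / 2) / k = if y % k ≤ k / 2 - 1 then y / k - 1 else y / k := by
    rw [Int.ediv_eq_iff_of_pos hk, mul_comm]
    split_ifs <;> constructor <;> linarith
  rw [rhoC1, Int.fdiv_eq_ediv_of_nonneg _ hk.le, hfloor]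
  split_ifs <;> linarith

theorem ediv_sub_ediv_le_sub {a b k : ℤ} (hk : 0 < k) (hab : a ≤ b) :
    b / k - a / k ≤ b - a := by
  have hgap : b - a ≤ (b - a) * k := le_mul_of_one_le_right (sub_nonneg.mpr hab) hk
  rw [sub_le_iff_le_add']
  calc b / k ≤ (a + (b - a) * k) / k := Int.ediv_le_ediv hk (by linarith)
    _ = a / k + (b - a) := Int.add_mul_ediv_right a (b - a) hk.ne'

theorem abs_sub_ediv_sub_le {k : ℤ} (hk : 0 < k) (a b : ℤ) :
    |(a - a / k) - (b - b / k)| ≤ |a - b| := by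
  wlog hab : a ≤ b generalizing a b
  · rw [abs_sub_comm, abs_sub_comm a]
    exact this b a (le_of_not_ge hab)
  have hmono : a / k ≤ b / k := Int.ediv_le_ediv hk hab
  have hlip : b / k - a / k ≤ b - a := ediv_sub_ediv_le_sub hk hab
  rw [abs_sub_comm, abs_sub_comm a, abs_of_nonneg (by linarith), abs_of_nonneg (by linarith)]
  linarith

theorem abs_rhoC1_sub_rhoC1_le {k : ℤ} (hk : 0 < k) (y z : ℤ) :
    |rhoC1 k y - rhoC1 k z| ≤ |y - z| := by
  rw [rhoC1_eq_sub_ediv hk, rhoC1_eq_sub_ediv hk]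
  convert abs_sub_ediv_sub_le hk (y - k / 2) (z - k / 2) using 2 <;> ring

theorem adj_rhoC {n : ℕ} {k : ℤ} (hk : 0 < k) {y z : Fin n → ℤ} (hyz : adj y z) :
    adj (rhoC k y) (rhoC k z) := fun i =>
  (abs_rhoC1_sub_rhoC1_le hk (y i) (z i)).trans (hyz i)

theorem rhoC_continuous_general {n : ℕ} (X : Set (Fin n → ℤ)) {k : ℤ} (hk : 2 ≤ k) :
    MapsTo (rhoC k) (Subdiv X k) (Subdiv X (k - 1)) ∧
      ∀ y z : Fin n → ℤ, adj y z → adj (rhoC k y) (rhoC k z) :=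
  ⟨mapsTo_rhoC_Subdiv X hk, fun _ _ => adj_rhoC (by omega)⟩

/-- for `k ≥ 3`, the partial projection `ρᶜ_k : S(X,k) → S(X,k-1)`
is well defined and continuous. -/
theorem rhoC_continuous {n : ℕ} (X : Set (Fin n → ℤ)) (hX : X.Finite)
    (k : ℤ) (hk : 3 ≤ k) :
    (∀ y ∈ Subdiv X k, rhoC k y ∈ Subdiv X (k - 1)) ∧
    (∀ y ∈ Subdiv X k, ∀ y' ∈ Subdiv X k, adj y y' → adj (rhoC k y) (rhoC k y')) := by
  obtain ⟨hmaps, hadj⟩ := rhoC_continuous_general X (by omega : 2 ≤ k)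
  exact ⟨hmaps, fun y _ y' _ => hadj y y'⟩
end

section
/- Let α : I_N → Y be a path of length N in a digital image Y ⊆ ℤⁿ, and let k ≥ 1. Then the standard cover α̂ : I_{(2k+1)N+2k} → ℤⁿ of α takes all its values in S(Y, 2k+1), is continuous (α̂(j) ∼ α̂(j+1) for 0 ≤ j ≤ (2k+1)N+2k−1), satisfies ρ_{2k+1} ∘ α̂ = α ∘ ρ_{2k+1} (so the covering square commutes, with ρ_{2k+1} : S(I_N,2k+1) = I_{(2k+1)N+2k} → I_N on the left and ρ_{2k+1} : S(Y,2k+1) → Y on the right), and maps centres to centres: α̂(ī) = \overline{α(i)} for every i ∈ I_N. -/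
open Set

/-- The standard projection `ρ_k`, coordinatewise floor-division by `k`. -/
def rho {n : ℕ} (k : ℤ) (y : Fin n → ℤ) : Fin n → ℤ := fun i => (y i).fdiv k

/-- The centre `ī = (2k+1)i + k` of `S(i, 2k+1) ⊆ ℤ`. -/
def bar (k i : ℤ) : ℤ := (2 * k + 1) * i + k

/-- The centre `ȳ = (2k+1)y + (k,…,k)` of `S(y, 2k+1) ⊆ ℤⁿ`. -/
def barPt {n : ℕ} (k : ℤ) (y : Fin n → ℤ) : Fin n → ℤ := fun i => (2 * k + 1) * y i + k

/-- The standard cover `α̂ : I_{(2k+1)N+2k} → ℤⁿ` of a path `α : I_N → Y ⊆ ℤⁿ`,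
with respect to the odd subdivision factor `2k+1`:
`α̂(j) = \overline{α(0)}` for `0 ≤ j ≤ k-1`;
`α̂(ī + t) = \overline{α(i)} + t (α(i+1) - α(i))` for `0 ≤ i ≤ N-1`, `0 ≤ t ≤ 2k`
(here `j = ī + t` has `i = (j-k) div (2k+1)` and `t = (j-k) mod (2k+1)`);
`α̂(j) = \overline{α(N)}` for `(2k+1)N + k ≤ j`. -/
def cover {n : ℕ} (k N : ℤ) (α : ℤ → Fin n → ℤ) (j : ℤ) : Fin n → ℤ :=
  if j ≤ k - 1 then barPt k (α 0)
  else if (2 * k + 1) * N + k ≤ j then barPt k (α N)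
  else fun i =>
    barPt k (α ((j - k).fdiv (2 * k + 1))) i
      + ((j - k) % (2 * k + 1)) *
          (α ((j - k).fdiv (2 * k + 1) + 1) i - α ((j - k).fdiv (2 * k + 1)) i)

/-!
Extend the path to all of `ℤ` by its two end values. The cover is then plain linear interpolation
between consecutive centres, with no special treatment of the ends. Around a centre, at `ī + s` with
`|s| ≤ k`, it differs from the centre of `α i` by `s` times a step of the path, hence by at most `k`
in each coordinate: this is the radius of the block `S(α i, 2k+1)`.
-/

section Centres

variable {n : ℕ} {k : ℤ}

theorem fdiv_two_mul_add_one_eq_iff (hk : 0 ≤ k) {i j : ℤ} :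
    j.fdiv (2 * k + 1) = i ↔ |j - bar k i| ≤ k := by
  rw [Int.fdiv_eq_ediv_of_nonneg j (by omega), Int.ediv_eq_iff_of_pos (by omega), abs_le, bar]
  constructor <;> rintro ⟨_, _⟩ <;> constructor <;> linarith

theorem rho_eq_iff (hk : 0 ≤ k) {x y : Fin n → ℤ} :
    rho (2 * k + 1) x = y ↔ ∀ c, |x c - barPt k y c| ≤ k := by
  simp only [funext_iff, rho, fdiv_two_mul_add_one_eq_iff hk, barPt, bar]

theorem bar_add_one (k i : ℤ) : bar k (i + 1) = bar k i + (2 * k + 1) := by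
  simp only [bar]
  ring

theorem barPt_sub (k : ℤ) (x y : Fin n → ℤ) :
    barPt k x - barPt k y = (2 * k + 1) • (x - y) := by
  ext c
  simp only [barPt, Pi.sub_apply, Pi.smul_apply, smul_eq_mul]
  ring

theorem exists_eq_bar_add (hk : 0 ≤ k) (j : ℤ) :
    ∃ i t, 0 ≤ t ∧ t ≤ 2 * k ∧ j = bar k i + t := by
  have ht := Int.emod_lt_of_pos (j - k) (show 0 < 2 * k + 1 by omega)
  refine ⟨(j - k) / (2 * k + 1), (j - k) % (2 * k + 1),
    Int.emod_nonneg _ (by omega), by omega, ?_⟩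
  have := Int.mul_ediv_add_emod (j - k) (2 * k + 1)
  simp only [bar]
  omega

theorem fdiv_mem_Icc (hk : 0 ≤ k) {N j : ℤ}
    (hj : j ∈ Icc 0 ((2 * k + 1) * N + 2 * k)) : j.fdiv (2 * k + 1) ∈ Icc 0 N := by
  rw [Int.fdiv_eq_ediv_of_nonneg j (by omega)]
  refine ⟨Int.ediv_nonneg hj.1 (by omega), Int.lt_add_one_iff.mp ?_⟩
  exact Int.ediv_lt_of_lt_mul (by omega) (by linarith [hj.2])

end Centres

/-- The standard cover of a bi-infinite path `β : ℤ → ℤⁿ`: linear interpolation between the centres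
of consecutive points. As in `cover`, the position `j = ī + t` with `0 ≤ t ≤ 2k` is read off from
the division of `j - k` by `2k+1`. -/
def interpCover {n : ℕ} (k : ℤ) (β : ℤ → Fin n → ℤ) (j : ℤ) : Fin n → ℤ :=
  barPt k (β ((j - k).fdiv (2 * k + 1))) +
    ((j - k) % (2 * k + 1)) • (β ((j - k).fdiv (2 * k + 1) + 1) - β ((j - k).fdiv (2 * k + 1)))

section InterpCover

variable {n : ℕ} {k : ℤ} (β : ℤ → Fin n → ℤ)

theorem interpCover_bar_add_of_lt {i t : ℤ} (ht₀ : 0 ≤ t) (ht : t < 2 * k + 1) :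
    interpCover k β (bar k i + t) = barPt k (β i) + t • (β (i + 1) - β i) := by
  have hsub : bar k i + t - k = t + (2 * k + 1) * i := by simp only [bar]; ring
  have hdiv : (bar k i + t - k).fdiv (2 * k + 1) = i := by
    rw [hsub, Int.fdiv_eq_ediv_of_nonneg _ (by omega), Int.add_mul_ediv_left _ _ (by omega),
      Int.ediv_eq_zero_of_lt ht₀ ht, zero_add]
  have hmod : (bar k i + t - k) % (2 * k + 1) = t := by
    rw [hsub, Int.add_mul_emod_self_left, Int.emod_eq_of_lt ht₀ ht]
  rw [interpCover, hdiv, hmod]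

theorem interpCover_bar (hk : 0 ≤ k) (i : ℤ) : interpCover k β (bar k i) = barPt k (β i) := by
  simpa using interpCover_bar_add_of_lt β (i := i) le_rfl (show 0 < 2 * k + 1 by omega)

theorem interpCover_bar_add (hk : 0 ≤ k) {i t : ℤ} (ht₀ : 0 ≤ t) (ht : t ≤ 2 * k + 1) :
    interpCover k β (bar k i + t) = barPt k (β i) + t • (β (i + 1) - β i) := by
  rcases ht.lt_or_eq with ht | rfl
  · exact interpCover_bar_add_of_lt β ht₀ ht
  · rw [← bar_add_one, interpCover_bar β hk, ← barPt_sub, add_sub_cancel]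

theorem interpCover_bar_sub (hk : 0 ≤ k) {i t : ℤ} (ht₀ : 0 ≤ t) (ht : t ≤ 2 * k + 1) :
    interpCover k β (bar k i - t) = barPt k (β i) - t • (β i - β (i - 1)) := by
  have hpos : bar k i - t = bar k (i - 1) + (2 * k + 1 - t) := by simp only [bar]; ring
  rw [hpos, interpCover_bar_add β hk (by omega) (by omega), sub_add_cancel, sub_smul, ← barPt_sub]
  abel

variable {β}

theorem adj_interpCover_add_one (hk : 0 ≤ k) (hβ : ∀ i, adj (β i) (β (i + 1))) (j : ℤ) :
    adj (interpCover k β j) (interpCover k β (j + 1)) := by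
  obtain ⟨i, t, ht₀, ht, rfl⟩ := exists_eq_bar_add hk j
  have hstep : interpCover k β (bar k i + t) - interpCover k β (bar k i + t + 1) =
      β i - β (i + 1) := by
    rw [add_assoc, interpCover_bar_add β hk ht₀ (by omega),
      interpCover_bar_add β hk (by omega) (by omega), add_smul, one_smul]
    abel
  intro c
  simpa only [← Pi.sub_apply, hstep] using hβ i c

theorem abs_interpCover_sub_barPt_le (hk : 0 ≤ k) (hβ : ∀ i, adj (β i) (β (i + 1))) {i j : ℤ}
    (hj : |j - bar k i| ≤ k) (c : Fin n) :
    |interpCover k β j c - barPt k (β i) c| ≤ k := by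
  obtain ⟨s, rfl⟩ : ∃ s, j = bar k i + s := ⟨j - bar k i, by ring⟩
  rw [add_sub_cancel_left] at hj
  have hmul {d : ℤ} (hd : |d| ≤ 1) : |s * d| ≤ k := by
    rw [abs_mul]
    exact (mul_le_of_le_one_right (abs_nonneg s) hd).trans hj
  rw [abs_le] at hj
  rcases le_total 0 s with hs | hs
  · rw [interpCover_bar_add β hk hs (by omega), Pi.add_apply, add_sub_cancel_left]
    exact hmul (abs_sub_comm (β i c) _ ▸ hβ i c)
  · have hprev : adj (β (i - 1)) (β i) := by simpa only [sub_add_cancel] using hβ (i - 1)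
    rw [← sub_neg_eq_add, interpCover_bar_sub β hk (by omega) (by omega), neg_smul,
      sub_neg_eq_add, Pi.add_apply, add_sub_cancel_left]
    exact hmul (abs_sub_comm (β (i - 1) c) _ ▸ hprev c)

theorem rho_interpCover (hk : 0 ≤ k) (hβ : ∀ i, adj (β i) (β (i + 1))) (j : ℤ) :
    rho (2 * k + 1) (interpCover k β j) = β (j.fdiv (2 * k + 1)) :=
  (rho_eq_iff hk).mpr
    (abs_interpCover_sub_barPt_le hk hβ ((fdiv_two_mul_add_one_eq_iff hk).mp rfl))

end InterpCover

section Extension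

variable {n : ℕ} {k N : ℤ} (α : ℤ → Fin n → ℤ)

theorem cover_eq_interpCover_IccExtend (hk : 0 ≤ k) (hN : 0 ≤ N) :
    cover k N α = interpCover k (IccExtend hN ((Icc 0 N).domRestrict α)) := by
  funext j
  obtain ⟨i, t, ht₀, ht, rfl⟩ := exists_eq_bar_add hk j
  rw [interpCover_bar_add _ hk ht₀ (by omega)]
  rcases lt_or_ge i 0 with hi₀ | hi₀
  · have hlow : bar k i + t ≤ k - 1 := by rw [bar]; nlinarith
    rw [cover, if_pos hlow, IccExtend_of_le_left _ _ hi₀.le, IccExtend_of_le_left _ _ hi₀,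
      sub_self, smul_zero, add_zero, domRestrict_apply]
  have hlow : ¬ bar k i + t ≤ k - 1 := by rw [bar]; nlinarith
  rcases lt_or_ge i N with hi | hi
  · have hhigh : ¬ (2 * k + 1) * N + k ≤ bar k i + t := by rw [bar]; nlinarith
    rw [cover, if_neg hlow, if_neg hhigh, IccExtend_of_mem _ _ ⟨hi₀, hi.le⟩,
      IccExtend_of_mem _ _ ⟨by omega, hi⟩]
    change interpCover k α (bar k i + t) = _
    exact interpCover_bar_add α hk ht₀ (by omega)
  · have hhigh : (2 * k + 1) * N + k ≤ bar k i + t := by rw [bar]; nlinarith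
    rw [cover, if_neg hlow, if_pos hhigh, IccExtend_of_right_le _ _ hi,
      IccExtend_of_right_le _ _ (by omega), sub_self, smul_zero, add_zero, domRestrict_apply]

variable {α}

theorem adj_IccExtend_add_one (hN : 0 ≤ N) (hα : ∀ i ∈ Ico 0 N, adj (α i) (α (i + 1))) (i : ℤ) :
    adj (IccExtend hN ((Icc 0 N).domRestrict α) i)
      (IccExtend hN ((Icc 0 N).domRestrict α) (i + 1)) := by
  have adj_refl (x : Fin n → ℤ) : adj x x := fun c => by simp
  rcases lt_or_ge i 0 with hi₀ | hi₀
  · rw [IccExtend_of_le_left _ _ hi₀.le, IccExtend_of_le_left _ _ hi₀]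
    exact adj_refl _
  rcases lt_or_ge i N with hi | hi
  · rw [IccExtend_of_mem _ _ ⟨hi₀, hi.le⟩, IccExtend_of_mem _ _ ⟨by omega, hi⟩]
    exact hα i ⟨hi₀, hi⟩
  · rw [IccExtend_of_right_le _ _ hi, IccExtend_of_right_le _ _ (by omega)]
    exact adj_refl _

end Extension

theorem standard_cover_covers_general {n : ℕ} (Y : Set (Fin n → ℤ)) (N k : ℤ) (hN : 0 ≤ N)
    (hk : 0 ≤ k) (α : ℤ → Fin n → ℤ) (hmaps : ∀ i ∈ Icc (0 : ℤ) N, α i ∈ Y)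
    (hcont : ∀ i ∈ Ico (0 : ℤ) N, adj (α i) (α (i + 1))) :
    (∀ j ∈ Icc (0 : ℤ) ((2 * k + 1) * N + 2 * k), cover k N α j ∈ Subdiv Y (2 * k + 1)) ∧
    (∀ j : ℤ, 0 ≤ j → j ≤ (2 * k + 1) * N + 2 * k - 1 →
      adj (cover k N α j) (cover k N α (j + 1))) ∧
    (∀ j ∈ Icc (0 : ℤ) ((2 * k + 1) * N + 2 * k),
      rho (2 * k + 1) (cover k N α j) = α (j.fdiv (2 * k + 1))) ∧
    (∀ i ∈ Icc (0 : ℤ) N, cover k N α (bar k i) = barPt k (α i)) := by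
  have hadj := adj_IccExtend_add_one hN hcont
  have hrho : ∀ j ∈ Icc (0 : ℤ) ((2 * k + 1) * N + 2 * k),
      rho (2 * k + 1) (cover k N α j) = α (j.fdiv (2 * k + 1)) := fun j hj => by
    rw [cover_eq_interpCover_IccExtend α hk hN, rho_interpCover hk hadj,
      IccExtend_of_mem _ _ (fdiv_mem_Icc hk hj), domRestrict_apply]
  refine ⟨fun j hj => ?_, fun j _ _ => ?_, hrho, fun i hi => ?_⟩
  · change rho (2 * k + 1) (cover k N α j) ∈ Y
    exact hrho j hj ▸ hmaps _ (fdiv_mem_Icc hk hj)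
  · rw [cover_eq_interpCover_IccExtend α hk hN]
    exact adj_interpCover_add_one hk hadj j
  · rw [cover_eq_interpCover_IccExtend α hk hN, interpCover_bar _ hk, IccExtend_of_mem _ _ hi,
      domRestrict_apply]

/-- the standard cover of a path `α : I_N → Y` takes values in
`S(Y, 2k+1)`, is continuous, covers `α` (i.e. `ρ_{2k+1} ∘ α̂ = α ∘ ρ_{2k+1}`),
and maps centres to centres. -/
theorem standard_cover_covers {n : ℕ} (Y : Set (Fin n → ℤ)) (hY : Y.Finite)
    (N k : ℤ) (hN : 1 ≤ N) (hk : 1 ≤ k)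
    (α : ℤ → Fin n → ℤ)
    (hmaps : ∀ i ∈ Icc (0 : ℤ) N, α i ∈ Y)
    (hcont : ∀ i ∈ Icc (0 : ℤ) N, ∀ i' ∈ Icc (0 : ℤ) N, |i - i'| ≤ 1 → adj (α i) (α i')) :
    (∀ j ∈ Icc (0 : ℤ) ((2 * k + 1) * N + 2 * k), cover k N α j ∈ Subdiv Y (2 * k + 1)) ∧
    (∀ j : ℤ, 0 ≤ j → j ≤ (2 * k + 1) * N + 2 * k - 1 →
      adj (cover k N α j) (cover k N α (j + 1))) ∧
    (∀ j ∈ Icc (0 : ℤ) ((2 * k + 1) * N + 2 * k),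
      rho (2 * k + 1) (cover k N α j) = α (j.fdiv (2 * k + 1))) ∧
    (∀ i ∈ Icc (0 : ℤ) N, cover k N α (bar k i) = barPt k (α i)) :=
  standard_cover_covers_general Y N k (by omega) (by omega) α hmaps fun i hi =>
    hcont i ⟨hi.1, hi.2.le⟩ (i + 1) ⟨by linarith [hi.1], hi.2⟩ (by simp)
end

section
/- Let α : I_N → Y be a path of length N in a digital image Y ⊆ ℤⁿ, and let k ≥ 2. Then there exists a continuous map F : S(I_N, k+1) = I_{N(k+1)+k} → S(Y, k) covering α, i.e. ρ_k ∘ F = α ∘ ρ_{k+1} : S(I_N, k+1) → Y. -/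
open Set

/-!
Subdividing scales all distances by `k`, so each coordinate of the path can be lifted separately:
while `j` runs through the `i`-th block of the domain, the lift stays in the block of `α i`,
entering it on the side facing `α (i - 1)` and leaving it on the side facing `α (i + 1)`. Both
points lie in a block of `k` integers, so a walk at unit speed gets from one to the other in
time `k - 1`, and any block length `m ≥ k` in the domain is long enough. The exit from one block and
the entry to the next one are equal or consecutive integers.
-/

section FloorDivision

variable {m : ℤ}

lemma fdiv_eq_iff_mem_Ico (hm : 0 < m) {j q : ℤ} :
    j.fdiv m = q ↔ j ∈ Ico (q * m) (q * m + m) := by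
  rw [Int.fdiv_eq_ediv_of_nonneg j hm.le, Int.ediv_eq_iff_of_pos hm, mem_Ico]

lemma preimage_fdiv_Icc (hm : 0 < m) (a b : ℤ) :
    (Int.fdiv · m) ⁻¹' Icc a b = Icc (a * m) (b * m + m - 1) := by
  ext j
  rw [mem_preimage, mem_Icc, mem_Icc, Int.fdiv_eq_ediv_of_nonneg j hm.le,
    Int.le_ediv_iff_mul_le hm, Int.ediv_le_iff_le_mul hm, Int.le_sub_one_iff]

lemma abs_fdiv_sub_fdiv_le_one (hm : 0 < m) {j j' : ℤ} (h : |j - j'| ≤ m) :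
    |j.fdiv m - j'.fdiv m| ≤ 1 := by
  have fdiv_le {x y : ℤ} (hxy : x ≤ y + m) : x.fdiv m ≤ y.fdiv m + 1 := by
    simpa only [Int.fdiv_eq_ediv_of_nonneg _ hm.le, Int.add_ediv_of_dvd_right (dvd_refl m),
      Int.ediv_self hm.ne'] using Int.ediv_le_ediv hm hxy
  rw [abs_sub_le_iff] at h ⊢
  have hle : j.fdiv m ≤ j'.fdiv m + 1 := fdiv_le (by omega)
  have hge : j'.fdiv m ≤ j.fdiv m + 1 := fdiv_le (by omega)
  omega

lemma fdiv_fmod_add_one (hm : 0 < m) (j : ℤ) :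
    ((j + 1).fdiv m = j.fdiv m ∧ (j + 1).fmod m = j.fmod m + 1) ∨
      ((j + 1).fdiv m = j.fdiv m + 1 ∧ j.fmod m = m - 1 ∧ (j + 1).fmod m = 0) := by
  have hnonneg := Int.fmod_nonneg_of_pos j hm
  have hlt := Int.fmod_lt_of_pos j hm
  have hj := Int.fmod_add_mul_fdiv j m
  by_cases hlast : j.fmod m = m - 1
  · have := (Int.fdiv_fmod_unique (a := j + 1) (r := 0) (q := j.fdiv m + 1) hm).2
      ⟨by linarith, le_rfl, hm⟩
    exact .inr ⟨this.1, hlast, this.2⟩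
  · exact .inl <| (Int.fdiv_fmod_unique hm).2 ⟨by linarith, by omega, by omega⟩

end FloorDivision

section Walk

/-- The position at time `r` of a point that starts at `s`, moves towards `t` at unit speed and
stops there. It is `t` clamped to the interval `[s - r, s + r]`. -/
def walk (s t r : ℤ) : ℤ := max (s - r) (min (s + r) t)

variable {s t r : ℤ}

lemma walk_zero (s t : ℤ) : walk s t 0 = s := by
  unfold walk
  omega

lemma walk_of_abs_sub_le (h : |s - t| ≤ r) : walk s t r = t := by
  rw [abs_sub_le_iff] at h
  unfold walk
  omega

lemma walk_mem_uIcc (hr : 0 ≤ r) : walk s t r ∈ uIcc s t := by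
  rw [mem_uIcc]
  unfold walk
  omega

lemma abs_walk_sub_walk_le (s t r r' : ℤ) : |walk s t r - walk s t r'| ≤ |r - r'| := by
  unfold walk
  grind

end Walk

section Gate

/-- The end of the block `[x * k, x * k + k - 1]` of integers that faces the block of `y`.
When `x = y`, it is the left end, so that `gate k x y` and `gate k y x` agree. -/
def gate (k x y : ℤ) : ℤ := x * k + if x < y then k - 1 else 0

lemma gate_mem_Ico {k : ℤ} (hk : 0 < k) (x y : ℤ) : gate k x y ∈ Ico (x * k) (x * k + k) := by
  rw [mem_Ico]
  unfold gate
  split_ifs <;> omega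

lemma abs_gate_sub_gate_comm_le_one (k : ℤ) {x y : ℤ} (h : |x - y| ≤ 1) :
    |gate k x y - gate k y x| ≤ 1 := by
  obtain rfl | rfl | rfl : y = x ∨ y = x + 1 ∨ x = y + 1 := by
    rw [abs_sub_le_iff] at h
    omega
  all_goals simp [gate, add_mul]

end Gate

section PathLift

/-- The lift of a path `a` in `ℤ` through the projections `ρ_m` on the domain and `ρ_k` on the
codomain: on the `i`-th block of length `m` it walks from the gate facing `a (i - 1)` to the gate
facing `a (i + 1)` in the block of `a i`. At an end of the domain of the path, the value
of `a` beyond it is arbitrary and only decides which end of the block serves as gate. -/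
def pathLift (k m : ℤ) (a : ℤ → ℤ) (j : ℤ) : ℤ :=
  let i := j.fdiv m
  walk (gate k (a i) (a (i - 1))) (gate k (a i) (a (i + 1))) (j.fmod m)

variable {k m : ℤ}

lemma fdiv_pathLift (hk : 0 < k) (hm : 0 < m) (a : ℤ → ℤ) (j : ℤ) :
    (pathLift k m a j).fdiv k = a (j.fdiv m) :=
  (fdiv_eq_iff_mem_Ico hk).2 <|
    ordConnected_Ico.uIcc_subset (gate_mem_Ico hk _ _) (gate_mem_Ico hk _ _) <|
      walk_mem_uIcc (Int.fmod_nonneg_of_pos j hm)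

lemma pathLift_eq_gate_of_fmod_eq_zero {j : ℤ} (a : ℤ → ℤ) (hj : j.fmod m = 0) :
    pathLift k m a j = gate k (a (j.fdiv m)) (a (j.fdiv m - 1)) := by
  simp only [pathLift, hj, walk_zero]

lemma pathLift_eq_gate_of_fmod_eq_sub_one (hk : 0 < k) (hkm : k ≤ m) {j : ℤ} (a : ℤ → ℤ)
    (hj : j.fmod m = m - 1) :
    pathLift k m a j = gate k (a (j.fdiv m)) (a (j.fdiv m + 1)) := by
  apply walk_of_abs_sub_le
  have hentry := gate_mem_Ico hk (a (j.fdiv m)) (a (j.fdiv m - 1))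
  have hexit := gate_mem_Ico hk (a (j.fdiv m)) (a (j.fdiv m + 1))
  rw [mem_Ico] at hentry hexit
  rw [hj, abs_sub_le_iff]
  omega

lemma abs_pathLift_sub_pathLift_add_one_le_one (hk : 0 < k) (hkm : k ≤ m) (a : ℤ → ℤ) (j : ℤ)
    (ha : |a (j.fdiv m) - a ((j + 1).fdiv m)| ≤ 1) :
    |pathLift k m a j - pathLift k m a (j + 1)| ≤ 1 := by
  obtain ⟨hdiv, hmod⟩ | ⟨hdiv, hlast, hfirst⟩ := fdiv_fmod_add_one (hk.trans_le hkm) j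
  · simpa [pathLift, hdiv, hmod] using abs_walk_sub_walk_le _ _ (j.fmod m) (j.fmod m + 1)
  · rw [pathLift_eq_gate_of_fmod_eq_sub_one hk hkm a hlast,
      pathLift_eq_gate_of_fmod_eq_zero a hfirst, hdiv, add_sub_cancel_right]
    exact abs_gate_sub_gate_comm_le_one k (hdiv ▸ ha)

lemma abs_pathLift_sub_pathLift_le_one (hk : 0 < k) (hkm : k ≤ m) (a : ℤ → ℤ) {j j' : ℤ}
    (hj : |j - j'| ≤ 1) (ha : |a (j.fdiv m) - a (j'.fdiv m)| ≤ 1) :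
    |pathLift k m a j - pathLift k m a j'| ≤ 1 := by
  obtain rfl | rfl | rfl : j' = j ∨ j' = j + 1 ∨ j = j' + 1 := by
    rw [abs_sub_le_iff] at hj
    omega
  · simp
  · exact abs_pathLift_sub_pathLift_add_one_le_one hk hkm a j ha
  · rw [abs_sub_comm] at ha ⊢
    exact abs_pathLift_sub_pathLift_add_one_le_one hk hkm a j' ha

end PathLift

theorem path_cover_exists_general {n : ℕ} (Y : Set (Fin n → ℤ)) (I : Set ℤ) {k m : ℤ}
    (hk : 0 < k) (hkm : k ≤ m) (α : ℤ → Fin n → ℤ)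
    (hmaps : ∀ i ∈ I, α i ∈ Y)
    (hcont : ∀ i ∈ I, ∀ i' ∈ I, |i - i'| ≤ 1 → adj (α i) (α i')) :
    ∃ F : ℤ → Fin n → ℤ,
      (∀ j ∈ (Int.fdiv · m) ⁻¹' I, F j ∈ Subdiv Y k) ∧
      (∀ j ∈ (Int.fdiv · m) ⁻¹' I, ∀ j' ∈ (Int.fdiv · m) ⁻¹' I,
        |j - j'| ≤ 1 → adj (F j) (F j')) ∧
      (∀ j ∈ (Int.fdiv · m) ⁻¹' I, rho k (F j) = α (j.fdiv m)) := by
  have hm : 0 < m := hk.trans_le hkm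
  let F : ℤ → Fin n → ℤ := fun j c => pathLift k m (α · c) j
  have rho_F (j : ℤ) : rho k (F j) = α (j.fdiv m) :=
    funext fun c => fdiv_pathLift hk hm (α · c) j
  refine ⟨F, fun j hj => ?_, fun j hj j' hj' hjj' c => ?_, fun j _ => rho_F j⟩
  · change rho k (F j) ∈ Y
    exact rho_F j ▸ hmaps _ hj
  · have hdiv := abs_fdiv_sub_fdiv_le_one hm (hjj'.trans hm)
    exact abs_pathLift_sub_pathLift_le_one hk hkm (α · c) hjj' (hcont _ hj _ hj' hdiv c)

/-- for any path `α : I_N → Y` and any `k ≥ 2` there exists a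
continuous map `F : S(I_N, k+1) = I_{N(k+1)+k} → S(Y, k)` covering `α`,
i.e. `ρ_k ∘ F = α ∘ ρ_{k+1}`. -/
theorem path_cover_exists {n : ℕ} (Y : Set (Fin n → ℤ)) (hY : Y.Finite)
    (N k : ℤ) (hN : 1 ≤ N) (hk : 2 ≤ k)
    (α : ℤ → Fin n → ℤ)
    (hmaps : ∀ i ∈ Icc (0 : ℤ) N, α i ∈ Y)
    (hcont : ∀ i ∈ Icc (0 : ℤ) N, ∀ i' ∈ Icc (0 : ℤ) N, |i - i'| ≤ 1 → adj (α i) (α i')) :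
    ∃ F : ℤ → Fin n → ℤ,
      (∀ j ∈ Icc (0 : ℤ) (N * (k + 1) + k), F j ∈ Subdiv Y k) ∧
      (∀ j ∈ Icc (0 : ℤ) (N * (k + 1) + k), ∀ j' ∈ Icc (0 : ℤ) (N * (k + 1) + k),
        |j - j'| ≤ 1 → adj (F j) (F j')) ∧
      (∀ j ∈ Icc (0 : ℤ) (N * (k + 1) + k), rho k (F j) = α (j.fdiv (k + 1))) := by
  have domain_eq : (Int.fdiv · (k + 1)) ⁻¹' Icc 0 N = Icc 0 (N * (k + 1) + k) := by
    rw [preimage_fdiv_Icc (by omega)]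
    congr 1 <;> ring
  exact domain_eq ▸ path_cover_exists_general Y (Icc 0 N) (by omega) (by omega) α hmaps hcont
end

section
/- Let H : I_M × I_N → Y be a continuous map, where Y ⊆ ℤⁿ is a digital image and I_M × I_N ⊆ ℤ² carries the product adjacency, and let k ≥ 1. Then there exists a continuous map Ĥ : S(I_M, 2k+1) × S(I_N, 2k+1) → S(Y, 2k+1) covering H, i.e. ρ_{2k+1} ∘ Ĥ = H ∘ (ρ_{2k+1} × ρ_{2k+1}), whose restrictions to the four edges are the standard covers of the corresponding edge paths of H: Ĥ(s, 0) = α̂₀(s) and Ĥ(s, (2k+1)N+2k) = α̂_N(s) for all s ∈ I_{(2k+1)M+2k}, where α₀(i) = H(i,0) and α_N(i) = H(i,N); and Ĥ(0, t) = β̂₀(t) and Ĥ((2k+1)M+2k, t) = β̂_M(t) for all t ∈ I_{(2k+1)N+2k}, where β₀(j) = H(0,j) and β_M(j) = H(M,j). -/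
open Set

/-!
Coordinatewise, extend `H` by clamping to a 1-Lipschitz `h : ℤ² → ℤ` for the sup-distance. Every
point `p` of the subdivided plane lies in the interior of a unique face, vertex, edge or square, of
the grid of centres. Let `G p` be the largest of the values `bar k (h v)` at the vertices `v` of
that face, and let `F p = ⨅ q, G q + d p q` be the largest 1-Lipschitz function below `G`. Any two
faces contain vertices that realize their distance, so `F p` is also at least the smallest of the
values `bar k (h v)`. Hence `F = bar k (h v)` at the centre of `v`, and the Lipschitz condition
alone keeps `F` over `h v` within distance `k` of that centre. On a line the Lipschitz condition
and the two bounds determine `F` completely, so `F` is the standard cover on each edge.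
-/

/-- `F` interpolates `φ : V → R` over `P`, where `c p` is the set of vertices of the smallest face
containing `p`: it is 1-Lipschitz for the distance `d`, and `F p` lies between the smallest and the
largest value of `φ` on `c p`. -/
structure IsInterpolation {P V R : Type*} [Add R] [LE R] (d : P → P → R) (c : P → Finset V)
    (φ : V → R) (F : P → R) : Prop where
  le_add_dist : ∀ p q, F p ≤ F q + d p q
  exists_le : ∀ p, ∃ v ∈ c p, φ v ≤ F p
  exists_ge : ∀ p, ∃ v ∈ c p, F p ≤ φ v

theorem IsInterpolation.eq_of_forall_mem {P V R : Type*} [Add R] [PartialOrder R]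
    {d : P → P → R} {c : P → Finset V} {φ : V → R} {F : P → R} (hF : IsInterpolation d c φ F)
    {p : P} {a : R} (ha : ∀ v ∈ c p, φ v = a) : F p = a := by
  obtain ⟨v, hv, hvF⟩ := hF.exists_le p
  obtain ⟨w, hw, hFw⟩ := hF.exists_ge p
  exact le_antisymm (hFw.trans_eq (ha w hw)) ((ha v hv).symm.trans_le hvF)

theorem exists_isInterpolation {P V R : Type*} [AddCommGroup R] [ConditionallyCompleteLinearOrder R]
    [IsOrderedAddMonoid R] {d : P → P → R} (d_self : ∀ p, d p p = 0)
    (d_triangle : ∀ p q r, d p r ≤ d p q + d q r) {c : P → Finset V} {φ : V → R}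
    (hφ : ∀ p q, ∃ v ∈ c p, ∃ w ∈ c q, φ v ≤ φ w + d p q) :
    ∃ F : P → R, IsInterpolation d c φ F := by
  have c_nonempty (p : P) : (c p).Nonempty := let ⟨v, hv, _⟩ := hφ p p; ⟨v, hv⟩
  choose lo lo_mem lo_le using fun p ↦ (c p).exists_min_image φ (c_nonempty p)
  choose hi hi_mem le_hi using fun p ↦ (c p).exists_max_image φ (c_nonempty p)
  have lo_le_hi_add (p q : P) : φ (lo p) ≤ φ (hi q) + d p q := by
    obtain ⟨v, hv, w, hw, hvw⟩ := hφ p q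
    calc φ (lo p) ≤ φ v := lo_le p v hv
      _ ≤ φ w + d p q := hvw
      _ ≤ φ (hi q) + d p q := by gcongr; exact le_hi q w hw
  have bddBelow (p : P) : BddBelow (Set.range fun q ↦ φ (hi q) + d p q) :=
    ⟨φ (lo p), Set.forall_mem_range.2 (lo_le_hi_add p)⟩
  refine ⟨fun p ↦ ⨅ q, φ (hi q) + d p q, fun p q ↦ ?_, fun p ↦ ?_, fun p ↦ ?_⟩
  · have : Nonempty P := ⟨p⟩
    refine sub_le_iff_le_add.1 (le_ciInf fun r ↦ sub_le_iff_le_add.2 ?_)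
    calc ⨅ r, φ (hi r) + d p r ≤ φ (hi r) + d p r := ciInf_le (bddBelow p) r
      _ ≤ φ (hi r) + (d p q + d q r) := by gcongr; exact d_triangle p q r
      _ = φ (hi r) + d q r + d p q := by abel
  · have : Nonempty P := ⟨p⟩
    exact ⟨lo p, lo_mem p, le_ciInf (lo_le_hi_add p)⟩
  · exact ⟨hi p, hi_mem p, (ciInf_le (bddBelow p) p).trans_eq (by rw [d_self, add_zero])⟩

/-- The sup-distance on `ℤ²`; points at distance at most 1 are the adjacent ones. -/
def chebDist (p q : ℤ × ℤ) : ℤ := max |p.1 - q.1| |p.2 - q.2|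

theorem chebDist_self (p : ℤ × ℤ) : chebDist p p = 0 := by simp [chebDist]

theorem chebDist_comm (p q : ℤ × ℤ) : chebDist p q = chebDist q p := by
  simp only [chebDist, abs_sub_comm]

theorem chebDist_triangle (p q r : ℤ × ℤ) : chebDist p r ≤ chebDist p q + chebDist q r :=
  max_le
    ((abs_sub_le _ q.1 _).trans (add_le_add (le_max_left _ _) (le_max_left _ _)))
    ((abs_sub_le _ q.2 _).trans (add_le_add (le_max_right _ _) (le_max_right _ _)))

theorem chebDist_swap (p q : ℤ × ℤ) : chebDist p.swap q.swap = chebDist p q := max_comm _ _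

/-- Digital continuity of `h : ℤ² → ℤ`: adjacent points have adjacent images. -/
def DigitallyContinuous (h : ℤ × ℤ → ℤ) : Prop := ∀ p q, chebDist p q ≤ 1 → |h p - h q| ≤ 1

theorem DigitallyContinuous.abs_sub_le_chebDist {h : ℤ × ℤ → ℤ} (hh : DigitallyContinuous h)
    (p q : ℤ × ℤ) :
    |h p - h q| ≤ chebDist p q := by
  suffices H : ∀ n : ℕ, ∀ p, chebDist p q ≤ n → |h p - h q| ≤ n by
    have nonneg : 0 ≤ chebDist p q := (abs_nonneg _).trans (le_max_left _ _)
    simpa only [Int.toNat_of_nonneg nonneg] using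
      H (chebDist p q).toNat p (Int.toNat_of_nonneg nonneg).ge
  intro n
  induction n with
  | zero =>
    intro p hp
    obtain rfl : p = q := by
      simp only [chebDist, max_le_iff, abs_le] at hp
      ext <;> omega
    simp
  | succ n ih =>
    intro p hp
    -- the point of the ball of radius `n` around `q` nearest to `p`
    let r : ℤ × ℤ := (max (q.1 - n) (min (q.1 + n) p.1), max (q.2 - n) (min (q.2 + n) p.2))
    have hpr : chebDist p r ≤ 1 := by
      simp only [chebDist, max_le_iff, abs_le, r] at hp ⊢
      omega
    have hrq : chebDist r q ≤ n := by
      simp only [chebDist, max_le_iff, abs_le, r]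
      omega
    have := abs_sub_le (h p) (h r) (h q)
    push_cast
    linarith [hh p r hpr, ih r hrq]

/-- The endpoints of the smallest face, point or segment `[bar k i, bar k (i + 1)]`, containing `s`:
the floor and the ceiling of the rational number `(s - k) / (2 * k + 1)`, the latter written as the
floor of `(s + k) / (2 * k + 1)`. -/
def carrier (k s : ℤ) : Finset ℤ := {(s - k) / (2 * k + 1), (s + k) / (2 * k + 1)}

/-- The vertices of the smallest face, vertex, edge or square, of the grid of centres in `ℤ²`
containing `p`. -/
def carrierProd (k : ℤ) (p : ℤ × ℤ) : Finset (ℤ × ℤ) := carrier k p.1 ×ˢ carrier k p.2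

/-- The linear interpolation of a path between consecutive centres: the middle case of `cover`, for
paths indexed by all of `ℤ`. -/
def lineInterp (k : ℤ) (α : ℤ → ℤ) (s : ℤ) : ℤ :=
  bar k (α ((s - k) / (2 * k + 1))) +
    (s - k) % (2 * k + 1) * (α ((s - k) / (2 * k + 1) + 1) - α ((s - k) / (2 * k + 1)))

theorem sub_bar_ediv (k s : ℤ) : s - bar k ((s - k) / (2 * k + 1)) = (s - k) % (2 * k + 1) := by
  rw [Int.emod_def, bar]
  ring

theorem sub_bar_ediv_add_one (k s : ℤ) :
    s - bar k ((s - k) / (2 * k + 1) + 1) = (s - k) % (2 * k + 1) - (2 * k + 1) := by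
  rw [Int.emod_def, bar]
  ring

section

variable {k : ℤ} (hk : 0 ≤ k)
include hk

theorem ediv_eq_iff_abs_sub_bar_le {s i : ℤ} : s / (2 * k + 1) = i ↔ |s - bar k i| ≤ k := by
  rw [Int.ediv_eq_iff_of_pos (by omega), abs_le, bar, mul_comm]
  constructor <;> intro <;> constructor <;> linarith

theorem carrier_bar (i : ℤ) : carrier k (bar k i) = {i} := by
  have floor_eq : (bar k i - k) / (2 * k + 1) = i := by
    rw [ediv_eq_iff_abs_sub_bar_le hk, abs_le]
    omega
  have ceil_eq : (bar k i + k) / (2 * k + 1) = i := by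
    rw [ediv_eq_iff_abs_sub_bar_le hk, abs_le]
    omega
  simp only [carrier, floor_eq, ceil_eq, Finset.pair_eq_singleton]

theorem mem_carrier {s i : ℤ} (hi : i ∈ carrier k s) :
    i = (s - k) / (2 * k + 1) ∨ i = (s - k) / (2 * k + 1) + 1 := by
  have floor_le_ceil : (s - k) / (2 * k + 1) ≤ (s + k) / (2 * k + 1) :=
    Int.ediv_le_ediv (by omega) (by omega)
  have ceil_le : (s + k) / (2 * k + 1) ≤ (s - k) / (2 * k + 1) + 1 := by
    rw [← Int.add_mul_ediv_right _ _ (by omega)]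
    exact Int.ediv_le_ediv (by omega) (by omega)
  simp only [carrier, Finset.mem_insert, Finset.mem_singleton] at hi
  omega

theorem exists_mem_carrier_mul_abs_sub_le (s t : ℤ) :
    ∃ i ∈ carrier k s, ∃ j ∈ carrier k t, (2 * k + 1) * |i - j| ≤ |s - t| := by
  wlog hst : s ≤ t generalizing s t
  · obtain ⟨j, hj, i, hi, hij⟩ := this t s (by omega)
    exact ⟨i, hi, j, hj, by rwa [abs_sub_comm i, abs_sub_comm s]⟩
  by_cases hle : (s + k) / (2 * k + 1) ≤ (t - k) / (2 * k + 1)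
  · refine ⟨(s + k) / (2 * k + 1), by simp [carrier], (t - k) / (2 * k + 1), by simp [carrier], ?_⟩
    have hs := Int.lt_mul_ediv_self_add (x := s + k) (k := 2 * k + 1) (by omega)
    have ht := Int.mul_ediv_self_le (x := t - k) (k := 2 * k + 1) (by omega)
    rw [abs_of_nonpos (by omega), abs_of_nonpos (by omega)]
    linarith
  · have floor_eq : (s - k) / (2 * k + 1) = (t - k) / (2 * k + 1) := by
      have := Int.ediv_le_ediv (c := 2 * k + 1) (by omega) (sub_le_sub_right hst k)
      have := mem_carrier hk (s := s) (i := (s + k) / (2 * k + 1)) (by simp [carrier])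
      omega
    refine ⟨(s - k) / (2 * k + 1), by simp [carrier], (t - k) / (2 * k + 1), by simp [carrier], ?_⟩
    simp [floor_eq]

theorem exists_mem_carrierProd_mul_chebDist_le (p q : ℤ × ℤ) :
    ∃ v ∈ carrierProd k p, ∃ w ∈ carrierProd k q,
      (2 * k + 1) * chebDist v w ≤ chebDist p q := by
  obtain ⟨i, hi, i', hi', hii'⟩ := exists_mem_carrier_mul_abs_sub_le hk p.1 q.1
  obtain ⟨j, hj, j', hj', hjj'⟩ := exists_mem_carrier_mul_abs_sub_le hk p.2 q.2
  refine ⟨(i, j), Finset.mk_mem_product hi hj, (i', j'), Finset.mk_mem_product hi' hj', ?_⟩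
  rw [chebDist, mul_max_of_nonneg _ _ (by omega)]
  exact max_le_max hii' hjj'

theorem exists_isInterpolation_carrierProd {h : ℤ × ℤ → ℤ}
    (hh : DigitallyContinuous h) :
    ∃ F, IsInterpolation chebDist (carrierProd k) (bar k ∘ h) F := by
  refine exists_isInterpolation chebDist_self chebDist_triangle fun p q ↦ ?_
  obtain ⟨v, hv, w, hw, hvw⟩ := exists_mem_carrierProd_mul_chebDist_le hk p q
  refine ⟨v, hv, w, hw, ?_⟩
  have h_le : h v - h w ≤ chebDist v w := (le_abs_self _).trans (hh.abs_sub_le_chebDist v w)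
  calc bar k (h v) = bar k (h w) + (2 * k + 1) * (h v - h w) := by unfold bar; ring
    _ ≤ bar k (h w) + (2 * k + 1) * chebDist v w := by gcongr
    _ ≤ bar k (h w) + chebDist p q := by gcongr

end

namespace IsInterpolation

variable {k : ℤ} {h F : ℤ × ℤ → ℤ} {α f : ℤ → ℤ}

theorem abs_sub_le_chebDist {V : Type*} {c : ℤ × ℤ → Finset V} {φ : V → ℤ}
    (hF : IsInterpolation chebDist c φ F) (p q : ℤ × ℤ) : |F p - F q| ≤ chebDist p q := by
  have hpq := hF.le_add_dist p q
  have hqp := hF.le_add_dist q p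
  rw [chebDist_comm] at hqp
  rw [abs_le]
  constructor <;> linarith

theorem fdiv_eq (hk : 0 ≤ k) (hF : IsInterpolation chebDist (carrierProd k) (bar k ∘ h) F)
    (s t : ℤ) :
    (F (s, t)).fdiv (2 * k + 1) = h (s.fdiv (2 * k + 1), t.fdiv (2 * k + 1)) := by
  simp only [Int.fdiv_eq_ediv_of_nonneg _ (show 0 ≤ 2 * k + 1 by omega)]
  let centre : ℤ × ℤ := (bar k (s / (2 * k + 1)), bar k (t / (2 * k + 1)))
  have at_centre : F centre = bar k (h (s / (2 * k + 1), t / (2 * k + 1))) :=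
    hF.eq_of_forall_mem (by simp [centre, carrierProd, carrier_bar hk])
  rw [ediv_eq_iff_abs_sub_bar_le hk, ← at_centre]
  calc |F (s, t) - F centre| ≤ chebDist (s, t) centre := hF.abs_sub_le_chebDist _ _
    _ ≤ k := max_le ((ediv_eq_iff_abs_sub_bar_le hk).1 rfl) ((ediv_eq_iff_abs_sub_bar_le hk).1 rfl)

theorem row (hF : IsInterpolation chebDist (carrierProd k) (bar k ∘ h) F) {t : ℤ}
    (hα : ∀ i, ∀ j ∈ carrier k t, h (i, j) = α i) :
    IsInterpolation (fun s s' ↦ |s - s'|) (carrier k) (bar k ∘ α) (fun s ↦ F (s, t)) where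
  le_add_dist s s' := by simpa [chebDist] using hF.le_add_dist (s, t) (s', t)
  exists_le s := by
    obtain ⟨⟨i, j⟩, hv, hle⟩ := hF.exists_le (s, t)
    obtain ⟨hi, hj⟩ := Finset.mem_product.1 hv
    exact ⟨i, hi, by rwa [Function.comp_apply, ← hα i j hj]⟩
  exists_ge s := by
    obtain ⟨⟨i, j⟩, hv, hle⟩ := hF.exists_ge (s, t)
    obtain ⟨hi, hj⟩ := Finset.mem_product.1 hv
    exact ⟨i, hi, by rwa [Function.comp_apply, ← hα i j hj]⟩

theorem swap (hF : IsInterpolation chebDist (carrierProd k) (bar k ∘ h) F) :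
    IsInterpolation chebDist (carrierProd k) (bar k ∘ h ∘ Prod.swap) (F ∘ Prod.swap) where
  le_add_dist p q := by
    simpa only [chebDist_swap, Function.comp_apply] using hF.le_add_dist p.swap q.swap
  exists_le p := by
    obtain ⟨v, hv, hle⟩ := hF.exists_le p.swap
    exact ⟨v.swap, Finset.mem_product.2 (Finset.mem_product.1 hv).symm, hle⟩
  exists_ge p := by
    obtain ⟨v, hv, hle⟩ := hF.exists_ge p.swap
    exact ⟨v.swap, Finset.mem_product.2 (Finset.mem_product.1 hv).symm, hle⟩

theorem eq_lineInterp (hk : 0 ≤ k) (hα : ∀ i, |α (i + 1) - α i| ≤ 1)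
    (hf : IsInterpolation (fun s s' ↦ |s - s'|) (carrier k) (bar k ∘ α) f) (s : ℤ) :
    f s = lineInterp k α s := by
  have at_bar (i : ℤ) : f (bar k i) = bar k (α i) :=
    hf.eq_of_forall_mem (by simp [carrier_bar hk])
  unfold lineInterp
  have sub_left := sub_bar_ediv k s
  have sub_right := sub_bar_ediv_add_one k s
  have u_nonneg : 0 ≤ (s - k) % (2 * k + 1) := Int.emod_nonneg _ (by omega)
  have u_lt : (s - k) % (2 * k + 1) < 2 * k + 1 := Int.emod_lt_of_pos _ (by omega)
  set i := (s - k) / (2 * k + 1)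
  set u := (s - k) % (2 * k + 1)
  have dist_left : |s - bar k i| = u := by rw [sub_left, abs_of_nonneg u_nonneg]
  have dist_right : |s - bar k (i + 1)| = 2 * k + 1 - u := by
    rw [sub_right, abs_of_neg (by omega), neg_sub]
  have upper_left : f s ≤ bar k (α i) + u := by
    simpa only [at_bar, dist_left] using hf.le_add_dist s (bar k i)
  have lower_left : bar k (α i) ≤ f s + u := by
    simpa only [at_bar, abs_sub_comm _ s, dist_left] using hf.le_add_dist (bar k i) s
  have upper_right : f s ≤ bar k (α (i + 1)) + (2 * k + 1 - u) := by
    simpa only [at_bar, dist_right] using hf.le_add_dist s (bar k (i + 1))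
  have lower_right : bar k (α (i + 1)) ≤ f s + (2 * k + 1 - u) := by
    simpa only [at_bar, abs_sub_comm _ s, dist_right] using hf.le_add_dist (bar k (i + 1)) s
  have slope : α (i + 1) = α i - 1 ∨ α (i + 1) = α i ∨ α (i + 1) = α i + 1 := by
    have := abs_le.1 (hα i)
    omega
  -- a slope `±1` leaves the Lipschitz function no freedom between the two centres
  rcases slope with down | const | up
  · simp only [down, bar] at lower_left upper_right ⊢
    linarith
  · rw [const, sub_self, mul_zero, add_zero]
    refine hf.eq_of_forall_mem fun j hj ↦ ?_
    rcases mem_carrier hk hj with rfl | rfl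
    · rfl
    · exact congrArg (bar k) const
  · simp only [up, bar] at upper_left lower_right ⊢
    linarith

end IsInterpolation

section

variable {R : Type*} [LinearOrder R] {a b x : R} (h : a ≤ b)

theorem coe_projIcc_of_le_left (hx : x ≤ a) : (projIcc a b h x : R) = a :=
  congrArg Subtype.val (projIcc_of_le_left h hx)

theorem coe_projIcc_of_right_le (hx : b ≤ x) : (projIcc a b h x : R) = b :=
  congrArg Subtype.val (projIcc_of_right_le h hx)

theorem coe_projIcc_of_mem (hx : x ∈ Icc a b) : (projIcc a b h x : R) = x :=
  congrArg Subtype.val (projIcc_of_mem h hx)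

end

/-- The coordinate `l` of a map on `I_M × I_N`, extended to `ℤ²` by clamping the arguments. -/
def clampCoord {n : ℕ} {M N : ℤ} (hM : 0 ≤ M) (hN : 0 ≤ N) (H : ℤ → ℤ → Fin n → ℤ) (l : Fin n)
    (v : ℤ × ℤ) : ℤ :=
  H (projIcc 0 M hM v.1) (projIcc 0 N hN v.2) l

section

variable {n : ℕ} {M N k : ℤ} (hM : 0 ≤ M) (hN : 0 ≤ N) (hk : 0 ≤ k)

theorem digitallyContinuous_clampCoord {H : ℤ → ℤ → Fin n → ℤ}
    (hcont : ∀ s ∈ Icc (0 : ℤ) M, ∀ t ∈ Icc (0 : ℤ) N,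
      ∀ s' ∈ Icc (0 : ℤ) M, ∀ t' ∈ Icc (0 : ℤ) N,
      |s - s'| ≤ 1 → |t - t'| ≤ 1 → adj (H s t) (H s' t')) (l : Fin n) :
    DigitallyContinuous (clampCoord hM hN H l) := by
  intro p q hpq
  obtain ⟨hfst, hsnd⟩ := max_le_iff.1 hpq
  exact hcont _ (projIcc 0 M hM p.1).2 _ (projIcc 0 N hN p.2).2
    _ (projIcc 0 M hM q.1).2 _ (projIcc 0 N hN q.2).2
    ((abs_projIcc_sub_projIcc hM).trans hfst) ((abs_projIcc_sub_projIcc hN).trans hsnd) l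

include hk

theorem nonpos_of_mem_carrier_zero {j : ℤ} (hj : j ∈ carrier k 0) : j ≤ 0 := by
  have floor_nonpos : (0 - k) / (2 * k + 1) ≤ 0 :=
    Int.ediv_nonpos_of_nonpos_of_neg (by omega) (by omega)
  have ceil_eq : (0 + k) / (2 * k + 1) = 0 := Int.ediv_eq_zero_of_lt (by omega) (by omega)
  simp only [carrier, Finset.mem_insert, Finset.mem_singleton] at hj
  omega

theorem le_of_mem_carrier_last {j : ℤ} (hj : j ∈ carrier k ((2 * k + 1) * N + 2 * k)) :
    N ≤ j := by
  have le_floor : N ≤ ((2 * k + 1) * N + 2 * k - k) / (2 * k + 1) := by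
    rw [Int.le_ediv_iff_mul_le (by omega)]
    linarith
  rcases mem_carrier hk hj with rfl | rfl <;> omega

theorem fdiv_mem_Icc_s11 {s : ℤ} (hs : s ∈ Icc 0 ((2 * k + 1) * N + 2 * k)) :
    s.fdiv (2 * k + 1) ∈ Icc 0 N := by
  rw [Int.fdiv_eq_ediv_of_nonneg _ (by omega)]
  refine ⟨Int.ediv_nonneg hs.1 (by omega), Int.lt_add_one_iff.1 ?_⟩
  rw [Int.ediv_lt_iff_lt_mul (by omega)]
  linarith [hs.2]

theorem cover_apply (α : ℤ → Fin n → ℤ) (s : ℤ) (l : Fin n) :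
    cover k N α s l = lineInterp k (fun i ↦ α (projIcc 0 N hN i) l) s := by
  simp only [cover, lineInterp]
  split_ifs with before_first after_last
  · have floor_neg : (s - k) / (2 * k + 1) < 0 := Int.ediv_neg_of_neg_of_pos (by omega) (by omega)
    rw [coe_projIcc_of_le_left hN floor_neg.le, coe_projIcc_of_le_left hN floor_neg, barPt, bar]
    ring
  · have le_floor : N ≤ (s - k) / (2 * k + 1) := by
      rw [Int.le_ediv_iff_mul_le (by omega)]
      linarith
    rw [coe_projIcc_of_right_le hN le_floor, coe_projIcc_of_right_le hN (by omega), barPt, bar]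
    ring
  · have floor_nonneg : 0 ≤ (s - k) / (2 * k + 1) := Int.ediv_nonneg (by omega) (by omega)
    have floor_lt : (s - k) / (2 * k + 1) < N := by
      rw [Int.ediv_lt_iff_lt_mul (by omega)]
      linarith
    rw [coe_projIcc_of_mem hN ⟨floor_nonneg, floor_lt.le⟩,
      coe_projIcc_of_mem hN ⟨by omega, floor_lt⟩, Int.fdiv_eq_ediv_of_nonneg _ (by omega)]
    rfl

theorem row_eq_cover {H : ℤ → ℤ → Fin n → ℤ} {F : Fin n → ℤ × ℤ → ℤ}
    (hH : ∀ l, DigitallyContinuous (clampCoord hM hN H l))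
    (hF : ∀ l, IsInterpolation chebDist (carrierProd k) (bar k ∘ clampCoord hM hN H l) (F l))
    {t b : ℤ} (hb : ∀ j ∈ carrier k t, (projIcc 0 N hN j : ℤ) = b) (s : ℤ) :
    (fun l ↦ F l (s, t)) = cover k M (fun i ↦ H i b) s := by
  funext l
  have hrow : ∀ i, ∀ j ∈ carrier k t, clampCoord hM hN H l (i, j) = H (projIcc 0 M hM i) b l :=
    fun i j hj ↦ by rw [clampCoord, hb j hj]
  have step (i : ℤ) : |H (projIcc 0 M hM (i + 1)) b l - H (projIcc 0 M hM i) b l| ≤ 1 := by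
    have hj : (t - k) / (2 * k + 1) ∈ carrier k t := Finset.mem_insert_self _ _
    rw [← hrow _ _ hj, ← hrow _ _ hj]
    exact hH l _ _ (by simp [chebDist])
  rw [cover_apply hM hk]
  exact ((hF l).row hrow).eq_lineInterp hk step s

theorem column_eq_cover {H : ℤ → ℤ → Fin n → ℤ} {F : Fin n → ℤ × ℤ → ℤ}
    (hH : ∀ l, DigitallyContinuous (clampCoord hM hN H l))
    (hF : ∀ l, IsInterpolation chebDist (carrierProd k) (bar k ∘ clampCoord hM hN H l) (F l))
    {s a : ℤ} (ha : ∀ i ∈ carrier k s, (projIcc 0 M hM i : ℤ) = a) (t : ℤ) :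
    (fun l ↦ F l (s, t)) = cover k N (fun j ↦ H a j) t :=
  row_eq_cover hN hM hk (H := fun j i ↦ H i j) (F := fun l ↦ F l ∘ Prod.swap)
    (fun l p q hpq ↦ hH l p.swap q.swap ((chebDist_swap p q).trans_le hpq))
    (fun l ↦ (hF l).swap) ha t

theorem rho_eq {H : ℤ → ℤ → Fin n → ℤ} {F : Fin n → ℤ × ℤ → ℤ}
    (hF : ∀ l, IsInterpolation chebDist (carrierProd k) (bar k ∘ clampCoord hM hN H l) (F l))
    {s t : ℤ} (hs : s ∈ Icc 0 ((2 * k + 1) * M + 2 * k))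
    (ht : t ∈ Icc 0 ((2 * k + 1) * N + 2 * k)) :
    rho (2 * k + 1) (fun l ↦ F l (s, t)) = H (s.fdiv (2 * k + 1)) (t.fdiv (2 * k + 1)) := by
  funext l
  rw [rho, (hF l).fdiv_eq hk, clampCoord, coe_projIcc_of_mem hM (fdiv_mem_Icc_s11 hk hs),
    coe_projIcc_of_mem hN (fdiv_mem_Icc_s11 hk ht)]

end

theorem rectangle_cover_exists_general {n : ℕ} (Y : Set (Fin n → ℤ))
    (M N k : ℤ) (hM : 0 ≤ M) (hN : 0 ≤ N) (hk : 0 ≤ k)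
    (H : ℤ → ℤ → Fin n → ℤ)
    (hmaps : ∀ s ∈ Icc (0 : ℤ) M, ∀ t ∈ Icc (0 : ℤ) N, H s t ∈ Y)
    (hcont : ∀ s ∈ Icc (0 : ℤ) M, ∀ t ∈ Icc (0 : ℤ) N,
      ∀ s' ∈ Icc (0 : ℤ) M, ∀ t' ∈ Icc (0 : ℤ) N,
      |s - s'| ≤ 1 → |t - t'| ≤ 1 → adj (H s t) (H s' t')) :
    ∃ Hhat : ℤ → ℤ → Fin n → ℤ,
      (∀ s ∈ Icc (0 : ℤ) ((2 * k + 1) * M + 2 * k), ∀ t ∈ Icc (0 : ℤ) ((2 * k + 1) * N + 2 * k),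
        Hhat s t ∈ Subdiv Y (2 * k + 1)) ∧
      (∀ s ∈ Icc (0 : ℤ) ((2 * k + 1) * M + 2 * k), ∀ t ∈ Icc (0 : ℤ) ((2 * k + 1) * N + 2 * k),
        ∀ s' ∈ Icc (0 : ℤ) ((2 * k + 1) * M + 2 * k), ∀ t' ∈ Icc (0 : ℤ) ((2 * k + 1) * N + 2 * k),
        |s - s'| ≤ 1 → |t - t'| ≤ 1 → adj (Hhat s t) (Hhat s' t')) ∧
      (∀ s ∈ Icc (0 : ℤ) ((2 * k + 1) * M + 2 * k), ∀ t ∈ Icc (0 : ℤ) ((2 * k + 1) * N + 2 * k),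
        rho (2 * k + 1) (Hhat s t) = H (s.fdiv (2 * k + 1)) (t.fdiv (2 * k + 1))) ∧
      (∀ s ∈ Icc (0 : ℤ) ((2 * k + 1) * M + 2 * k),
        Hhat s 0 = cover k M (fun i => H i 0) s) ∧
      (∀ s ∈ Icc (0 : ℤ) ((2 * k + 1) * M + 2 * k),
        Hhat s ((2 * k + 1) * N + 2 * k) = cover k M (fun i => H i N) s) ∧
      (∀ t ∈ Icc (0 : ℤ) ((2 * k + 1) * N + 2 * k),
        Hhat 0 t = cover k N (fun j => H 0 j) t) ∧
      (∀ t ∈ Icc (0 : ℤ) ((2 * k + 1) * N + 2 * k),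
        Hhat ((2 * k + 1) * M + 2 * k) t = cover k N (fun j => H M j) t) := by
  have hH := digitallyContinuous_clampCoord hM hN hcont
  choose F hF using fun l ↦ exists_isInterpolation_carrierProd hk (hH l)
  have hrho := fun s hs t ht ↦ rho_eq hM hN hk hF (s := s) (t := t) hs ht
  refine ⟨fun s t l ↦ F l (s, t), fun s hs t ht ↦ ?_, fun s _ t _ s' _ t' _ hs ht l ↦ ?_, hrho,
    fun s _ ↦ ?_, fun s _ ↦ ?_, fun t _ ↦ ?_, fun t _ ↦ ?_⟩
  · change rho _ _ ∈ Y
    rw [hrho s hs t ht]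
    exact hmaps _ (fdiv_mem_Icc_s11 hk hs) _ (fdiv_mem_Icc_s11 hk ht)
  · exact ((hF l).abs_sub_le_chebDist _ _).trans (max_le hs ht)
  · exact row_eq_cover hM hN hk hH hF
      (fun j hj ↦ coe_projIcc_of_le_left hN (nonpos_of_mem_carrier_zero hk hj)) s
  · exact row_eq_cover hM hN hk hH hF
      (fun j hj ↦ coe_projIcc_of_right_le hN (le_of_mem_carrier_last hk hj)) s
  · exact column_eq_cover hM hN hk hH hF
      (fun i hi ↦ coe_projIcc_of_le_left hM (nonpos_of_mem_carrier_zero hk hi)) t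
  · exact column_eq_cover hM hN hk hH hF
      (fun i hi ↦ coe_projIcc_of_right_le hM (le_of_mem_carrier_last hk hi)) t

/-- a continuous map `H : I_M × I_N → Y` admits a continuous cover
`Ĥ : S(I_M,2k+1) × S(I_N,2k+1) → S(Y,2k+1)` with `ρ_{2k+1} ∘ Ĥ = H ∘ (ρ_{2k+1} × ρ_{2k+1})`,
whose restrictions to the four edges of the rectangle are the standard covers of the
corresponding edge paths of `H`. -/
theorem rectangle_cover_exists {n : ℕ} (Y : Set (Fin n → ℤ)) (hY : Y.Finite)
    (M N k : ℤ) (hM : 1 ≤ M) (hN : 1 ≤ N) (hk : 1 ≤ k)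
    (H : ℤ → ℤ → Fin n → ℤ)
    (hmaps : ∀ s ∈ Icc (0 : ℤ) M, ∀ t ∈ Icc (0 : ℤ) N, H s t ∈ Y)
    (hcont : ∀ s ∈ Icc (0 : ℤ) M, ∀ t ∈ Icc (0 : ℤ) N,
      ∀ s' ∈ Icc (0 : ℤ) M, ∀ t' ∈ Icc (0 : ℤ) N,
      |s - s'| ≤ 1 → |t - t'| ≤ 1 → adj (H s t) (H s' t')) :
    ∃ Hhat : ℤ → ℤ → Fin n → ℤ,
      -- values in S(Y, 2k+1)
      (∀ s ∈ Icc (0 : ℤ) ((2 * k + 1) * M + 2 * k), ∀ t ∈ Icc (0 : ℤ) ((2 * k + 1) * N + 2 * k),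
        Hhat s t ∈ Subdiv Y (2 * k + 1)) ∧
      -- continuity
      (∀ s ∈ Icc (0 : ℤ) ((2 * k + 1) * M + 2 * k), ∀ t ∈ Icc (0 : ℤ) ((2 * k + 1) * N + 2 * k),
        ∀ s' ∈ Icc (0 : ℤ) ((2 * k + 1) * M + 2 * k), ∀ t' ∈ Icc (0 : ℤ) ((2 * k + 1) * N + 2 * k),
        |s - s'| ≤ 1 → |t - t'| ≤ 1 → adj (Hhat s t) (Hhat s' t')) ∧
      -- covering: ρ_{2k+1} ∘ Ĥ = H ∘ (ρ_{2k+1} × ρ_{2k+1})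
      (∀ s ∈ Icc (0 : ℤ) ((2 * k + 1) * M + 2 * k), ∀ t ∈ Icc (0 : ℤ) ((2 * k + 1) * N + 2 * k),
        rho (2 * k + 1) (Hhat s t) = H (s.fdiv (2 * k + 1)) (t.fdiv (2 * k + 1))) ∧
      -- bottom and top edges are standard covers of the horizontal edge paths
      (∀ s ∈ Icc (0 : ℤ) ((2 * k + 1) * M + 2 * k),
        Hhat s 0 = cover k M (fun i => H i 0) s) ∧
      (∀ s ∈ Icc (0 : ℤ) ((2 * k + 1) * M + 2 * k),
        Hhat s ((2 * k + 1) * N + 2 * k) = cover k M (fun i => H i N) s) ∧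
      -- left and right edges are standard covers of the vertical edge paths
      (∀ t ∈ Icc (0 : ℤ) ((2 * k + 1) * N + 2 * k),
        Hhat 0 t = cover k N (fun j => H 0 j) t) ∧
      (∀ t ∈ Icc (0 : ℤ) ((2 * k + 1) * N + 2 * k),
        Hhat ((2 * k + 1) * M + 2 * k) t = cover k N (fun j => H M j) t) := by
  exact rectangle_cover_exists_general Y M N k (by omega) (by omega) (by omega) H hmaps hcont
end

section
/- Let k ≥ 1 and n ≥ 1, and write 0̄ = k, 1̄ = 3k+1 ∈ ℤ. Let ∂([0̄,1̄]²) = {0̄,1̄} × [0̄,1̄] ∪ [0̄,1̄] × {0̄,1̄} ⊆ ℤ² be the boundary of the square [0̄,1̄]². Suppose F : ∂([0̄,1̄]²) → [0̄,1̄]ⁿ ⊆ ℤⁿ satisfies: (1) for each corner v = (v₁,v₂) ∈ {0,1}², every coordinate of F(v̄₁,v̄₂) lies in {0̄, 1̄} — define f : {0,1}² → {0,1}ⁿ by f(v) = ρ_{2k+1}(F(v̄₁,v̄₂)); and (2) for each pair of horizontally or vertically adjacent corners v, v' of {0,1}², F((v̄₁,v̄₂) + t·(v' − v)) = F(v̄₁,v̄₂)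 + t·(f(v') − f(v)) for all t = 0,…,2k+1. Then F extends to a continuous map F : [0̄,1̄]² → [0̄,1̄]ⁿ satisfying ρ_{2k+1} ∘ F = f ∘ ρ_{2k+1} on [0̄,1̄]²; in particular, F maps each quadrant [0̄,1̄]² ∩ S(v, 2k+1) (v ∈ {0,1}²) into the orthant [0̄,1̄]ⁿ ∩ S(f(v), 2k+1). -/
open Set

/-- The boundary `∂([0̄,1̄]²) = {0̄,1̄} × [0̄,1̄] ∪ [0̄,1̄] × {0̄,1̄}` as a predicate
on pairs `(p,q)`. -/
def onBoundary (k p q : ℤ) : Prop :=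
  ((p = k ∨ p = 3 * k + 1) ∧ q ∈ Icc k (3 * k + 1)) ∨
  (p ∈ Icc k (3 * k + 1) ∧ (q = k ∨ q = 3 * k + 1))

/-!
Each coordinate of `f` colours the blocks of the lattice with the labels `0` and `1`. The
corresponding coordinate of the extension is the signed sup-norm distance to the interface between
the two colours, truncated at the block radius `k`, and shifted so that the values next to the
interface are `2k` and `2k+1`. It moves by at most one per step and respects the blocks. It is
`0̄` or `1̄` at the centre of a block; on an edge joining two centres of the same colour, balls of
radius `k` meet only that colour, so it is constant there, and on an edge joining centres of
different colours it must change by `2k+1` in `2k+1` unit steps, so it is linear. The same argument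
works in any dimension.
-/

section Depth

variable {X : Type*} [PseudoMetricSpace X] {k : ℕ} {A : Set X} {x y : X}

open Classical in
/-- The depth of `x` inside `A`: the largest natural number `r ≤ k` for which the closed ball of
radius `r` about `x` is contained in `A`, with the junk value `0` if there is none. -/
noncomputable def ballDepth (k : ℕ) (A : Set X) (x : X) : ℕ :=
  Nat.findGreatest (fun r : ℕ => Metric.closedBall x r ⊆ A) k

lemma ballDepth_le : ballDepth k A x ≤ k := by
  classical exact Nat.findGreatest_le k

lemma closedBall_ballDepth_subset (h : ballDepth k A x ≠ 0) :
    Metric.closedBall x (ballDepth k A x) ⊆ A := by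
  classical exact Nat.findGreatest_of_ne_zero (P := fun r : ℕ => Metric.closedBall x r ⊆ A) rfl h

lemma ballDepth_eq_of_closedBall_subset (h : Metric.closedBall x k ⊆ A) : ballDepth k A x = k := by
  classical exact ballDepth_le.antisymm (Nat.le_findGreatest le_rfl h)

lemma ballDepth_le_ballDepth_add_one (hxy : dist x y ≤ 1) :
    ballDepth k A x ≤ ballDepth k A y + 1 := by
  classical
  by_cases hx : ballDepth k A x = 0
  · omega
  · have hball : Metric.closedBall y (ballDepth k A x - 1 : ℕ) ⊆ A := by
      refine (Metric.closedBall_subset_closedBall' ?_).trans (closedBall_ballDepth_subset hx)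
      rw [Nat.cast_pred (Nat.pos_of_ne_zero hx), dist_comm]
      linarith
    have : ballDepth k A x - 1 ≤ ballDepth k A y :=
      Nat.le_findGreatest ((Nat.sub_le _ _).trans ballDepth_le) hball
    omega

lemma ballDepth_eq_zero_of_notMem (hxy : dist x y ≤ 1) (hy : y ∉ A) : ballDepth k A x = 0 := by
  by_contra hx
  refine hy (closedBall_ballDepth_subset hx (Metric.mem_closedBall'.2 (hxy.trans ?_)))
  exact_mod_cast Nat.one_le_iff_ne_zero.2 hx

open Classical in
/-- A truncated signed distance to the interface between `A` and its complement. The asymmetric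
shift by one makes the values on the two sides of the interface, `1` and `0`, consecutive. -/
noncomputable def signedDepth (k : ℕ) (A : Set X) (x : X) : ℤ :=
  if x ∈ A then ballDepth k A x + 1 else -ballDepth k Aᶜ x

lemma signedDepth_of_mem (hx : x ∈ A) : signedDepth k A x = ballDepth k A x + 1 := if_pos hx

lemma signedDepth_of_notMem (hx : x ∉ A) : signedDepth k A x = -ballDepth k Aᶜ x := if_neg hx

lemma signedDepth_mem_Icc_of_mem (hx : x ∈ A) : signedDepth k A x ∈ Icc (1 : ℤ) (k + 1) := by
  have := ballDepth_le (k := k) (A := A) (x := x)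
  rw [signedDepth_of_mem hx, mem_Icc]
  omega

lemma signedDepth_mem_Icc_of_notMem (hx : x ∉ A) : signedDepth k A x ∈ Icc (-k : ℤ) 0 := by
  have := ballDepth_le (k := k) (A := Aᶜ) (x := x)
  rw [signedDepth_of_notMem hx, mem_Icc]
  omega

lemma signedDepth_le_signedDepth_add_one (hxy : dist x y ≤ 1) :
    signedDepth k A x ≤ signedDepth k A y + 1 := by
  have hyx : dist y x ≤ 1 := dist_comm x y ▸ hxy
  by_cases hx : x ∈ A
  · by_cases hy : y ∈ A
    · have := ballDepth_le_ballDepth_add_one (k := k) (A := A) hxy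
      rw [signedDepth_of_mem hx, signedDepth_of_mem hy]
      omega
    · rw [signedDepth_of_mem hx, signedDepth_of_notMem hy, ballDepth_eq_zero_of_notMem hxy hy,
        ballDepth_eq_zero_of_notMem hyx (notMem_compl_iff.2 hx)]
      norm_num
  · by_cases hy : y ∈ A
    · have := (signedDepth_mem_Icc_of_notMem (k := k) hx).2
      have := (signedDepth_mem_Icc_of_mem (k := k) hy).1
      omega
    · have := ballDepth_le_ballDepth_add_one (k := k) (A := Aᶜ) hyx
      rw [signedDepth_of_notMem hx, signedDepth_of_notMem hy]
      omega

end Depth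

lemma eq_add_sub_of_step_le_one {h : ℤ → ℤ} (hstep : ∀ t, h (t + 1) ≤ h t + 1) {a b t : ℤ}
    (hab : h b - h a = b - a) (ht : t ∈ Icc a b) : h t = h a + (t - a) := by
  have hmono : Monotone fun s => s - h s :=
    monotone_int_of_le_succ fun s => by linarith [hstep s]
  linarith [hmono ht.1, hmono ht.2]

section Lattice

variable {m : ℕ} {k : ℕ}

lemma dist_le_natCast_iff {P Q : Fin m → ℤ} : dist P Q ≤ k ↔ ∀ i, |P i - Q i| ≤ k := by
  simp only [dist_pi_le_iff k.cast_nonneg, Int.dist_eq]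
  norm_cast

lemma dist_le_one_of_adj {P Q : Fin m → ℤ} (h : adj P Q) : dist P Q ≤ 1 := by
  exact_mod_cast dist_le_natCast_iff (k := 1).2 (by exact_mod_cast h)

lemma fdiv_eq_iff_abs_sub_bar_le {x a : ℤ} : x.fdiv (2 * k + 1) = a ↔ |x - bar k a| ≤ k := by
  rw [Int.fdiv_eq_ediv_of_nonneg _ (by omega), Int.ediv_eq_iff_of_pos (by omega), abs_le, bar]
  constructor <;> rintro ⟨h₁, h₂⟩ <;> constructor <;> linarith

lemma fdiv_bar (a : ℤ) : (bar k a).fdiv (2 * k + 1) = a := by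
  simp [fdiv_eq_iff_abs_sub_bar_le]

lemma fdiv_eq_zero_of_mem_Icc {x : ℤ} (hx : x ∈ Icc (k : ℤ) (2 * k)) : x.fdiv (2 * k + 1) = 0 := by
  rw [mem_Icc] at hx
  rw [fdiv_eq_iff_abs_sub_bar_le, abs_le, bar]
  omega

lemma fdiv_eq_one_of_mem_Icc {x : ℤ} (hx : x ∈ Icc (2 * k + 1 : ℤ) (3 * k + 1)) :
    x.fdiv (2 * k + 1) = 1 := by
  rw [mem_Icc] at hx
  rw [fdiv_eq_iff_abs_sub_bar_le, abs_le, bar]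
  omega

lemma fdiv_mem_zero_one {x : ℤ} (hx : x ∈ Icc (k : ℤ) (3 * k + 1)) :
    x.fdiv (2 * k + 1) ∈ ({0, 1} : Set ℤ) := by
  rcases le_or_gt x (2 * k) with hle | hgt
  · exact .inl (fdiv_eq_zero_of_mem_Icc ⟨hx.1, hle⟩)
  · exact .inr (fdiv_eq_one_of_mem_Icc ⟨hgt, hx.2⟩)

lemma bar_fdiv_of_eq_or_eq {x : ℤ} (hx : x = k ∨ x = 3 * k + 1) :
    bar k (x.fdiv (2 * k + 1)) = x := by
  have hbar : x = bar k 0 ∨ x = bar k 1 := by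
    simp only [bar]
    omega
  rcases hbar with rfl | rfl <;> rw [fdiv_bar]

/-- The lattice point at distance `t` from the centre `v̄` of the block of `v`, in the direction of
the `j`-th coordinate. For `0 ≤ t ≤ 2k+1` these points form the edge between two adjacent
centres. -/
def edgePoint (k : ℕ) (v : Fin m → ℤ) (j : Fin m) (t : ℤ) : Fin m → ℤ :=
  Function.update (bar k ∘ v) j (bar k (v j) + t)

lemma edgePoint_zero (v : Fin m → ℤ) (j : Fin m) : edgePoint k v j 0 = bar k ∘ v := by
  simp [edgePoint]

lemma edgePoint_two_mul_add_one (v : Fin m → ℤ) (j : Fin m) :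
    edgePoint k v j (2 * k + 1) = bar k ∘ Function.update v j (v j + 1) := by
  rw [edgePoint, Function.comp_update]
  congr 1
  simp only [bar]
  ring

lemma dist_edgePoint_add_one_le (v : Fin m → ℤ) (j : Fin m) (t : ℤ) :
    dist (edgePoint k v j (t + 1)) (edgePoint k v j t) ≤ 1 := by
  refine dist_le_one_of_adj fun i => ?_
  obtain rfl | hij := eq_or_ne i j
  · simp [edgePoint]
  · simp [edgePoint, hij]

lemma rho_eq_of_dist_bar_le {v Q : Fin m → ℤ} (hQ : dist Q (bar k ∘ v) ≤ k) :
    rho (2 * k + 1) Q = v :=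
  funext fun i => fdiv_eq_iff_abs_sub_bar_le.2 (dist_le_natCast_iff.1 hQ i)

lemma rho_eq_or_eq_of_dist_edgePoint_le {v Q : Fin m → ℤ} {j : Fin m} {t : ℤ}
    (ht : t ∈ Icc (0 : ℤ) (2 * k + 1)) (hQ : dist Q (edgePoint k v j t) ≤ k) :
    rho (2 * k + 1) Q = v ∨ rho (2 * k + 1) Q = Function.update v j (v j + 1) := by
  rw [dist_le_natCast_iff] at hQ
  have hother : ∀ i ≠ j, rho (2 * k + 1) Q i = v i := fun i hij =>
    fdiv_eq_iff_abs_sub_bar_le.2 (by simpa [edgePoint, hij] using hQ i)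
  have hj : |Q j - (bar k (v j) + t)| ≤ k := by simpa [edgePoint] using hQ j
  have hbar : bar k (v j + 1) = bar k (v j) + (2 * k + 1) := by simp only [bar]; ring
  obtain ⟨ht₀, ht₁⟩ := ht
  rw [abs_le] at hj
  rcases le_or_gt (Q j) (bar k (v j) + k) with hle | hgt
  · have hQj : rho (2 * k + 1) Q j = v j :=
      fdiv_eq_iff_abs_sub_bar_le.2 (by rw [abs_le]; omega)
    exact .inl (Function.update_eq_self j v ▸ Function.eq_update_iff.2 ⟨hQj, hother⟩)
  · have hQj : rho (2 * k + 1) Q j = v j + 1 :=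
      fdiv_eq_iff_abs_sub_bar_le.2 (by rw [hbar, abs_le]; omega)
    exact .inr (Function.eq_update_iff.2 ⟨hQj, hother⟩)

variable {f : (Fin m → ℤ) → ℤ} {P : Fin m → ℤ}

/-- The union `S(f⁻¹(1), 2k+1)` of the blocks that the labelling `f` sends to `1`. -/
def oneRegion (k : ℕ) (f : (Fin m → ℤ) → ℤ) : Set (Fin m → ℤ) := {Q | f (rho (2 * k + 1) Q) = 1}

lemma notMem_oneRegion_of_eq_zero (h : f (rho (2 * k + 1) P) = 0) : P ∉ oneRegion k f :=
  fun h₁ => zero_ne_one (h.symm.trans h₁)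

/-- The interpolation of a `{0,1}`-valued labelling `f` of the blocks of the lattice: one coordinate
of the extended map, with values in `[0̄,1̄]`. Labels other than `1` are treated as `0`. -/
noncomputable def labelInterp (k : ℕ) (f : (Fin m → ℤ) → ℤ) (P : Fin m → ℤ) : ℤ :=
  2 * k + signedDepth k (oneRegion k f) P

lemma labelInterp_mem_Icc_of_mem (hP : P ∈ oneRegion k f) :
    labelInterp k f P ∈ Icc (2 * k + 1 : ℤ) (3 * k + 1) := by
  obtain ⟨hlo, hhi⟩ := signedDepth_mem_Icc_of_mem (k := k) hP
  rw [labelInterp, mem_Icc]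
  omega

lemma labelInterp_mem_Icc_of_notMem (hP : P ∉ oneRegion k f) :
    labelInterp k f P ∈ Icc (k : ℤ) (2 * k) := by
  obtain ⟨hlo, hhi⟩ := signedDepth_mem_Icc_of_notMem (k := k) hP
  rw [labelInterp, mem_Icc]
  omega

lemma labelInterp_mem_Icc : labelInterp k f P ∈ Icc (k : ℤ) (3 * k + 1) := by
  by_cases hP : P ∈ oneRegion k f
  · exact Icc_subset_Icc_left (by omega) (labelInterp_mem_Icc_of_mem hP)
  · exact Icc_subset_Icc_right (by omega) (labelInterp_mem_Icc_of_notMem hP)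

lemma labelInterp_le_add_one {Q : Fin m → ℤ} (h : dist P Q ≤ 1) :
    labelInterp k f P ≤ labelInterp k f Q + 1 := by
  rw [labelInterp, labelInterp, add_assoc]
  exact add_le_add_right (signedDepth_le_signedDepth_add_one h) _

lemma abs_labelInterp_sub_le_one {Q : Fin m → ℤ} (h : dist P Q ≤ 1) :
    |labelInterp k f P - labelInterp k f Q| ≤ 1 :=
  abs_sub_le_iff.2 ⟨sub_le_iff_le_add'.2 (labelInterp_le_add_one h),
    sub_le_iff_le_add'.2 (labelInterp_le_add_one (dist_comm P Q ▸ h))⟩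

lemma labelInterp_fdiv (hf : f (rho (2 * k + 1) P) ∈ ({0, 1} : Set ℤ)) :
    (labelInterp k f P).fdiv (2 * k + 1) = f (rho (2 * k + 1) P) := by
  rcases hf with hf | (hf : f (rho (2 * k + 1) P) = 1)
  · rw [hf]
    exact fdiv_eq_zero_of_mem_Icc (labelInterp_mem_Icc_of_notMem (notMem_oneRegion_of_eq_zero hf))
  · rw [hf]
    exact fdiv_eq_one_of_mem_Icc (labelInterp_mem_Icc_of_mem hf)

lemma labelInterp_eq_bar_of_forall_dist_le {a : ℤ} (ha : a ∈ ({0, 1} : Set ℤ))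
    (h : ∀ Q, dist Q P ≤ k → f (rho (2 * k + 1) Q) = a) : labelInterp k f P = bar k a := by
  have hP := h P (by simp)
  rw [labelInterp, bar]
  rcases ha with rfl | rfl
  · have hball : Metric.closedBall P k ⊆ (oneRegion k f)ᶜ :=
      fun Q hQ => notMem_oneRegion_of_eq_zero (h Q hQ)
    rw [signedDepth_of_notMem (notMem_oneRegion_of_eq_zero hP),
      ballDepth_eq_of_closedBall_subset hball]
    ring
  · have hball : Metric.closedBall P k ⊆ oneRegion k f := h
    have hmem : P ∈ oneRegion k f := hP
    rw [signedDepth_of_mem hmem, ballDepth_eq_of_closedBall_subset hball]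
    ring

lemma labelInterp_bar {v : Fin m → ℤ} (hv : f v ∈ ({0, 1} : Set ℤ)) :
    labelInterp k f (bar k ∘ v) = bar k (f v) :=
  labelInterp_eq_bar_of_forall_dist_le hv fun _ hQ => congrArg f (rho_eq_of_dist_bar_le hQ)

lemma labelInterp_edgePoint {v : Fin m → ℤ} {j : Fin m} (hv : f v ∈ ({0, 1} : Set ℤ))
    (hv' : f (Function.update v j (v j + 1)) ∈ ({0, 1} : Set ℤ)) {t : ℤ}
    (ht : t ∈ Icc (0 : ℤ) (2 * k + 1)) :
    labelInterp k f (edgePoint k v j t) =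
      bar k (f v) + t * (f (Function.update v j (v j + 1)) - f v) := by
  let h : ℤ → ℤ := fun s => labelInterp k f (edgePoint k v j s)
  have hstep (s : ℤ) : |h (s + 1) - h s| ≤ 1 :=
    abs_labelInterp_sub_le_one (dist_edgePoint_add_one_le v j s)
  have hstart : h 0 = bar k (f v) := by
    simp only [h, edgePoint_zero, labelInterp_bar hv]
  have hend : h (2 * k + 1) = bar k (f (Function.update v j (v j + 1))) := by
    simp only [h, edgePoint_two_mul_add_one, labelInterp_bar hv']
  have hconst (heq : f (Function.update v j (v j + 1)) = f v) : h t = bar k (f v) :=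
    labelInterp_eq_bar_of_forall_dist_le hv fun Q hQ => by
      rcases rho_eq_or_eq_of_dist_edgePoint_le ht hQ with hρ | hρ <;> simp only [hρ, heq]
  change h t = _
  rcases hv with hv | (hv : f v = 1) <;>
    rcases hv' with hv' | (hv' : f (Function.update v j (v j + 1)) = 1) <;>
    simp only [hv, hv', bar] at hstart hend hconst ⊢
  · linarith [hconst trivial]
  · have := eq_add_sub_of_step_le_one (fun s => by linarith [(abs_le.1 (hstep s)).2])
      (by linarith : h (2 * k + 1) - h 0 = 2 * k + 1 - 0) ht
    linarith
  · have := eq_add_sub_of_step_le_one (h := -h)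
      (fun s => by simp only [Pi.neg_apply]; linarith [(abs_le.1 (hstep s)).1])
      (by simp only [Pi.neg_apply]; linarith : (-h) (2 * k + 1) - (-h) 0 = 2 * k + 1 - 0) ht
    simp only [Pi.neg_apply] at this
    linarith
  · linarith [hconst trivial]

theorem exists_adj_interpolation (k : ℕ) {n : ℕ} {X : Set (Fin m → ℤ)}
    {f : (Fin m → ℤ) → Fin n → ℤ} (hf : ∀ v ∈ X, ∀ i, f v i ∈ ({0, 1} : Set ℤ)) :
    ∃ G : (Fin m → ℤ) → Fin n → ℤ,
      (∀ P i, G P i ∈ Icc (k : ℤ) (3 * k + 1)) ∧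
      (∀ P Q, adj P Q → adj (G P) (G Q)) ∧
      (∀ P, rho (2 * k + 1) P ∈ X → rho (2 * k + 1) (G P) = f (rho (2 * k + 1) P)) ∧
      (∀ v ∈ X, ∀ j, Function.update v j (v j + 1) ∈ X → ∀ t ∈ Icc (0 : ℤ) (2 * k + 1), ∀ i,
        G (edgePoint k v j t) i =
          bar k (f v i) + t * (f (Function.update v j (v j + 1)) i - f v i)) :=
  ⟨fun P i => labelInterp k (f · i) P,
    fun _ _ => labelInterp_mem_Icc,
    fun _ _ hPQ _ => abs_labelInterp_sub_le_one (dist_le_one_of_adj hPQ),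
    fun _ hP => funext fun i => labelInterp_fdiv (hf _ hP i),
    fun _ hv _ hv' _ ht i => labelInterp_edgePoint (hf _ hv i) (hf _ hv' i) ht⟩

lemma edgePoint_fin_two_zero (a b t : ℤ) :
    edgePoint k ![a, b] 0 t = ![bar k a + t, bar k b] := by
  ext j
  fin_cases j <;> simp [edgePoint]

lemma edgePoint_fin_two_one (a b t : ℤ) :
    edgePoint k ![a, b] 1 t = ![bar k a, bar k b + t] := by
  ext j
  fin_cases j <;> simp [edgePoint]

lemma exists_edge_of_onBoundary {p q : ℤ} (h : onBoundary k p q) :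
    ∃ a ∈ ({0, 1} : Set ℤ), ∃ t ∈ Icc (0 : ℤ) (2 * k + 1),
      (p = bar k 0 + t ∧ q = bar k a) ∨ (p = bar k a ∧ q = bar k 0 + t) := by
  have hbar₀ : bar k 0 = k := by simp [bar]
  have hbar₁ : bar k 1 = 3 * k + 1 := by simp only [bar]; ring
  have hshift {x : ℤ} (hx : x ∈ Icc (k : ℤ) (3 * k + 1)) :
      x - k ∈ Icc (0 : ℤ) (2 * k + 1) := by
    rw [mem_Icc] at hx ⊢
    omega
  rcases h with ⟨hp | hp, hq⟩ | ⟨hp, hq | hq⟩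
  · exact ⟨0, by simp, q - k, hshift hq, .inr ⟨hp.trans hbar₀.symm, by simp [hbar₀]⟩⟩
  · exact ⟨1, by simp, q - k, hshift hq, .inr ⟨hp.trans hbar₁.symm, by simp [hbar₀]⟩⟩
  · exact ⟨0, by simp, p - k, hshift hp, .inl ⟨by simp [hbar₀], hq.trans hbar₀.symm⟩⟩
  · exact ⟨1, by simp, p - k, hshift hp, .inl ⟨by simp [hbar₀], hq.trans hbar₁.symm⟩⟩

end Lattice

/-- a map `F` on the boundary of the square `[0̄,1̄]²` into the cube
`[0̄,1̄]ⁿ` which (1) sends corners to corners and (2) interpolates linearly along the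
edges (toward the values `f(v) = ρ_{2k+1}(F(v̄₁,v̄₂))`) extends to a continuous map
`G : [0̄,1̄]² → [0̄,1̄]ⁿ` with `ρ_{2k+1} ∘ G = f ∘ ρ_{2k+1}`; in particular each
quadrant of the square is mapped into the orthant `S(f(v),2k+1)` of the cube. -/
theorem square_boundary_extension {n : ℕ} (hn : 1 ≤ n) (k : ℤ) (hk : 1 ≤ k)
    (F : ℤ → ℤ → Fin n → ℤ)
    (hFcube : ∀ p q : ℤ, onBoundary k p q → ∀ i, F p q i ∈ Icc k (3 * k + 1))
    (hcorner : ∀ v₁ ∈ ({0, 1} : Set ℤ), ∀ v₂ ∈ ({0, 1} : Set ℤ), ∀ i,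
      F (bar k v₁) (bar k v₂) i = k ∨ F (bar k v₁) (bar k v₂) i = 3 * k + 1)
    (hedgeH : ∀ v₁ ∈ ({0, 1} : Set ℤ), ∀ v₂ ∈ ({0, 1} : Set ℤ),
      ∀ t ∈ Icc (0 : ℤ) (2 * k + 1),
      F (bar k v₁ + t * ((1 - v₁) - v₁)) (bar k v₂) = fun i =>
        F (bar k v₁) (bar k v₂) i +
          t * ((F (bar k (1 - v₁)) (bar k v₂) i).fdiv (2 * k + 1)
                - (F (bar k v₁) (bar k v₂) i).fdiv (2 * k + 1)))
    (hedgeV : ∀ v₁ ∈ ({0, 1} : Set ℤ), ∀ v₂ ∈ ({0, 1} : Set ℤ),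
      ∀ t ∈ Icc (0 : ℤ) (2 * k + 1),
      F (bar k v₁) (bar k v₂ + t * ((1 - v₂) - v₂)) = fun i =>
        F (bar k v₁) (bar k v₂) i +
          t * ((F (bar k v₁) (bar k (1 - v₂)) i).fdiv (2 * k + 1)
                - (F (bar k v₁) (bar k v₂) i).fdiv (2 * k + 1))) :
    ∃ G : ℤ → ℤ → Fin n → ℤ,
      -- G extends F
      (∀ p q : ℤ, onBoundary k p q → G p q = F p q) ∧
      -- G maps the square into the cube [0̄,1̄]ⁿ
      (∀ p ∈ Icc k (3 * k + 1), ∀ q ∈ Icc k (3 * k + 1), ∀ i, G p q i ∈ Icc k (3 * k + 1)) ∧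
      -- G is continuous
      (∀ p ∈ Icc k (3 * k + 1), ∀ q ∈ Icc k (3 * k + 1),
        ∀ p' ∈ Icc k (3 * k + 1), ∀ q' ∈ Icc k (3 * k + 1),
        |p - p'| ≤ 1 → |q - q'| ≤ 1 → adj (G p q) (G p' q')) ∧
      -- ρ_{2k+1} ∘ G = f ∘ ρ_{2k+1}: each quadrant lands in the corresponding orthant
      (∀ p ∈ Icc k (3 * k + 1), ∀ q ∈ Icc k (3 * k + 1),
        rho (2 * k + 1) (G p q) =
          rho (2 * k + 1) (F (bar k (p.fdiv (2 * k + 1))) (bar k (q.fdiv (2 * k + 1))))) := by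
  lift k to ℕ using by omega
  let f : (Fin 2 → ℤ) → Fin n → ℤ := fun v => rho (2 * k + 1) (F (bar k (v 0)) (bar k (v 1)))
  have hf : ∀ v ∈ {v : Fin 2 → ℤ | v 0 ∈ ({0, 1} : Set ℤ) ∧ v 1 ∈ ({0, 1} : Set ℤ)}, ∀ i,
      f v i ∈ ({0, 1} : Set ℤ) := fun v hv i =>
    fdiv_mem_zero_one (by have := hcorner _ hv.1 _ hv.2 i; rw [mem_Icc]; omega)
  obtain ⟨G, hcube, hadj, hrho, hedge⟩ := exists_adj_interpolation k hf
  refine ⟨fun p q => G ![p, q], fun p q hpq => ?_, fun p _ q _ => hcube _,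
    fun p _ q _ p' _ q' _ hp hq => hadj _ _ (Fin.forall_fin_two.2 ⟨hp, hq⟩),
    fun p hp q hq => hrho _ ⟨fdiv_mem_zero_one hp, fdiv_mem_zero_one hq⟩⟩
  obtain ⟨a, ha, t, ht, ⟨rfl, rfl⟩ | ⟨rfl, rfl⟩⟩ := exists_edge_of_onBoundary hpq <;> funext i
  · have hG := hedge ![0, a] ⟨.inl rfl, ha⟩ 0 ⟨.inr rfl, ha⟩ t ht i
    have hF := congrFun (hedgeH 0 (.inl rfl) a ha t ht) i
    simp only [sub_zero, mul_one] at hF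
    have hv := bar_fdiv_of_eq_or_eq (hcorner 0 (.inl rfl) a ha i)
    simpa [edgePoint_fin_two_zero, f, rho, hv, hF] using hG
  · have hG := hedge ![a, 0] ⟨ha, .inl rfl⟩ 1 ⟨ha, .inr rfl⟩ t ht i
    have hF := congrFun (hedgeV a ha 0 (.inl rfl) t ht) i
    simp only [sub_zero, mul_one] at hF
    have hv := bar_fdiv_of_eq_or_eq (hcorner a ha 0 (.inl rfl) i)
    simpa [edgePoint_fin_two_one, f, rho, hv, hF] using hG
end

section
/- Let f : X → Y be a continuous map of digital images, where X ⊆ ℤ² and Y ⊆ ℤⁿ, and let k ≥ 1. Then there exists a continuous map f̂ : S(X, 2k+1) → S(Y, 2k+1) covering f, i.e. ρ_{2k+1} ∘ f̂ = f ∘ ρ_{2k+1} : S(X, 2k+1) → Y. -/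
open Set

/-!
A cover of `f` amounts to one integer function `F` per coordinate `t`, with `⌊F / K⌋ = φ` for
`φ p = f (ρ_K p) t` and with variation at most `1` along edges of `S(X, K)`. Such an `F` is a
discrete McShane extension squeezed between `K * φ` and `K * φ + (K - 1)`: `F q` is the supremum,
over all walks ending at `q`, of `K * φ` at the start minus the length of the walk. The upper bound
holds because `ρ_K` sends the ends of a walk of length at most `K` to adjacent points, so `φ`
changes by at most `1` along every `K` steps.
-/

lemma fdiv_eq_of_mul_le_of_le {K a b : ℤ} (hK : 0 < K) (hle : K * b ≤ a)
    (hge : a ≤ K * b + (K - 1)) : a.fdiv K = b := by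
  rw [Int.fdiv_eq_ediv_of_nonneg _ hK.le, Int.ediv_eq_iff_of_pos hK]
  constructor <;> linarith

lemma fdiv_le_fdiv_add_one {K a b : ℤ} (hK : 0 < K) (h : a ≤ b + K) :
    a.fdiv K ≤ b.fdiv K + 1 := by
  simp only [Int.fdiv_eq_ediv_of_nonneg _ hK.le]
  calc a / K ≤ (b + K) / K := Int.ediv_le_ediv hK h
    _ = b / K + 1 := by rw [Int.add_ediv_of_dvd_right dvd_rfl, Int.ediv_self hK.ne']

section Walks

variable {V : Type*} {G : SimpleGraph V}

lemma abs_sub_le_walk_length {φ : V → ℤ} (hφ : ∀ p q, G.Adj p q → |φ p - φ q| ≤ 1) {p q : V}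
    (w : G.Walk p q) : |φ p - φ q| ≤ w.length := by
  induction w with
  | nil => simp
  | @cons p r q hpr w ih =>
    calc |φ p - φ q| ≤ |φ p - φ r| + |φ r - φ q| := abs_sub_le _ _ _
      _ ≤ 1 + w.length := add_le_add (hφ p r hpr) ih
      _ = (w.cons hpr).length := by rw [SimpleGraph.Walk.length_cons]; push_cast; ring

/-- The discrete McShane extension: the least function above `lo` that varies by at most `1` along
the edges of `G`. It is meaningful only where the supremum is bounded, since an unbounded `⨆` in `ℤ`
is `0`. -/
noncomputable def lipschitzEnvelope (G : SimpleGraph V) (lo : V → ℤ) (q : V) : ℤ :=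
  ⨆ w : Σ p, G.Walk p q, lo w.1 - w.2.length

section Envelope

variable {lo hi : V → ℤ} (hlohi : ∀ p q (w : G.Walk p q), lo p ≤ hi q + w.length)
include hlohi

lemma sub_walk_length_le_lipschitzEnvelope {p q : V} (w : G.Walk p q) :
    lo p - w.length ≤ lipschitzEnvelope G lo q := by
  have hbdd : BddAbove (range fun w : Σ p, G.Walk p q ↦ lo w.1 - w.2.length) :=
    ⟨hi q, forall_mem_range.2 fun w ↦ sub_le_iff_le_add.2 (hlohi w.1 q w.2)⟩
  exact le_ciSup hbdd ⟨p, w⟩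

lemma le_lipschitzEnvelope (q : V) : lo q ≤ lipschitzEnvelope G lo q := by
  simpa using sub_walk_length_le_lipschitzEnvelope hlohi (.nil : G.Walk q q)

lemma lipschitzEnvelope_le (q : V) : lipschitzEnvelope G lo q ≤ hi q :=
  have : Nonempty (Σ p, G.Walk p q) := ⟨q, .nil⟩
  ciSup_le fun w ↦ sub_le_iff_le_add.2 (hlohi w.1 q w.2)

lemma lipschitzEnvelope_le_add_one {p q : V} (hpq : G.Adj p q) :
    lipschitzEnvelope G lo p ≤ lipschitzEnvelope G lo q + 1 := by
  have : Nonempty (Σ r, G.Walk r p) := ⟨p, .nil⟩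
  refine ciSup_le fun ⟨r, w⟩ ↦ ?_
  have hconcat := sub_walk_length_le_lipschitzEnvelope hlohi (w.concat hpq)
  rw [SimpleGraph.Walk.length_concat] at hconcat
  push_cast at hconcat
  linarith

lemma abs_lipschitzEnvelope_sub_le_one {p q : V} (hpq : G.Adj p q) :
    |lipschitzEnvelope G lo p - lipschitzEnvelope G lo q| ≤ 1 :=
  abs_sub_le_iff.2 ⟨sub_le_iff_le_add'.2 (lipschitzEnvelope_le_add_one hlohi hpq),
    sub_le_iff_le_add'.2 (lipschitzEnvelope_le_add_one hlohi hpq.symm)⟩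

end Envelope

lemma mul_le_mul_add_walk_length {K : ℕ} (hK : 0 < K) {φ : V → ℤ}
    (hφ : ∀ p q (w : G.Walk p q), w.length ≤ K → φ p ≤ φ q + 1) {p q : V} (w : G.Walk p q) :
    K * φ p ≤ K * φ q + (K - 1) + w.length := by
  induction hm : w.length using Nat.strong_induction_on generalizing p with
  | _ m ih =>
    subst hm
    obtain hzero | hpos := Nat.eq_zero_or_pos w.length
    · obtain rfl := SimpleGraph.Walk.eq_of_length_eq_zero hzero
      lia
    obtain hshort | hlong := le_or_gt w.length K
    · have hφpq : K * φ p ≤ K * (φ q + 1) := by gcongr; exact hφ p q w hshort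
      lia
    · have hhead : K * φ p ≤ K * (φ (w.getVert K) + 1) := by
        gcongr
        exact hφ p _ (w.take K) (by simp)
      have htail := ih _ (by rw [SimpleGraph.Walk.drop_length]; lia) (w.drop K) rfl
      rw [SimpleGraph.Walk.drop_length, Nat.cast_sub hlong.le] at htail
      linarith

theorem exists_fdiv_eq_of_walk {K : ℕ} (hK : 0 < K) {φ : V → ℤ}
    (hφ : ∀ p q (w : G.Walk p q), w.length ≤ K → φ p ≤ φ q + 1) :
    ∃ F : V → ℤ, (∀ p, (F p).fdiv K = φ p) ∧ ∀ p q, G.Adj p q → |F p - F q| ≤ 1 := by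
  have hlohi (p q : V) (w : G.Walk p q) : K * φ p ≤ K * φ q + (K - 1) + w.length :=
    mul_le_mul_add_walk_length hK hφ w
  exact ⟨lipschitzEnvelope G fun p ↦ K * φ p,
    fun p ↦ fdiv_eq_of_mul_le_of_le (mod_cast hK)
      (le_lipschitzEnvelope hlohi p) (lipschitzEnvelope_le hlohi p),
    fun _ _ ↦ abs_lipschitzEnvelope_sub_le_one hlohi⟩

end Walks

section DigitalImages

variable {n : ℕ}

lemma adj_comm {x y : Fin n → ℤ} : adj x y ↔ adj y x := by
  simp only [adj, abs_sub_comm]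

/-- The adjacency graph of `ℤⁿ`. As `adj` is reflexive, the loops have to be removed. -/
def digitalGraph (n : ℕ) : SimpleGraph (Fin n → ℤ) where
  Adj x y := x ≠ y ∧ adj x y
  symm := ⟨fun _ _ h ↦ ⟨h.1.symm, adj_comm.1 h.2⟩⟩
  loopless := ⟨fun _ h ↦ h.1 rfl⟩

lemma adj_rho_of_abs_sub_le {K : ℤ} (hK : 0 < K) {p q : Fin n → ℤ}
    (hpq : ∀ i, |p i - q i| ≤ K) : adj (rho K p) (rho K q) := fun i ↦ by
  obtain ⟨hle, hge⟩ := abs_sub_le_iff.1 (hpq i)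
  exact abs_sub_le_iff.2
    ⟨sub_le_iff_le_add'.2 (fdiv_le_fdiv_add_one hK (sub_le_iff_le_add'.1 hle)),
      sub_le_iff_le_add'.2 (fdiv_le_fdiv_add_one hK (sub_le_iff_le_add'.1 hge))⟩

lemma adj_rho_of_walk {K : ℕ} (hK : 0 < K) {S : Set (Fin n → ℤ)} {p q : S}
    (w : ((digitalGraph n).induce S).Walk p q) (hw : w.length ≤ K) :
    adj (rho K p.1) (rho K q.1) := by
  refine adj_rho_of_abs_sub_le (mod_cast hK) fun i ↦ ?_
  have hstep (x y : S) (h : ((digitalGraph n).induce S).Adj x y) : |x.1 i - y.1 i| ≤ 1 := h.2 i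
  exact (abs_sub_le_walk_length hstep w).trans (mod_cast hw)

theorem exists_fdiv_eq_comp_rho {X : Set (Fin n → ℤ)} {K : ℤ} (hK : 0 < K)
    {g : (Fin n → ℤ) → ℤ} (hg : ∀ x ∈ X, ∀ x' ∈ X, adj x x' → |g x - g x'| ≤ 1) :
    ∃ F : (Fin n → ℤ) → ℤ, (∀ p ∈ Subdiv X K, (F p).fdiv K = g (rho K p)) ∧
      ∀ p ∈ Subdiv X K, ∀ q ∈ Subdiv X K, adj p q → |F p - F q| ≤ 1 := by
  lift K to ℕ using hK.le
  rw [Int.natCast_pos] at hK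
  obtain ⟨F, hFdiv, hFadj⟩ := exists_fdiv_eq_of_walk hK
    (G := (digitalGraph n).induce (Subdiv X K)) (φ := fun p ↦ g (rho K p.1)) fun p q w hw ↦
      sub_le_iff_le_add'.1 (abs_sub_le_iff.1 (hg _ p.2 _ q.2 (adj_rho_of_walk hK w hw))).1
  obtain ⟨F, rfl⟩ := Subtype.exists_pi_extension (α := fun _ ↦ ℤ) F
  refine ⟨F, fun p hp ↦ hFdiv ⟨p, hp⟩, fun p hp q hq hpq ↦ ?_⟩
  obtain rfl | hne := eq_or_ne p q
  · simp
  · exact hFadj ⟨p, hp⟩ ⟨q, hq⟩ ⟨hne, hpq⟩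

end DigitalImages

theorem twoD_cover_exists_general {d n : ℕ} {X : Set (Fin d → ℤ)} {Y : Set (Fin n → ℤ)} {K : ℤ}
    (hK : 0 < K) {f : (Fin d → ℤ) → Fin n → ℤ} (hmaps : ∀ x ∈ X, f x ∈ Y)
    (hcont : ∀ x ∈ X, ∀ x' ∈ X, adj x x' → adj (f x) (f x')) :
    ∃ fhat : (Fin d → ℤ) → Fin n → ℤ,
      (∀ p ∈ Subdiv X K, fhat p ∈ Subdiv Y K) ∧
      (∀ p ∈ Subdiv X K, ∀ p' ∈ Subdiv X K, adj p p' → adj (fhat p) (fhat p')) ∧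
      (∀ p ∈ Subdiv X K, rho K (fhat p) = f (rho K p)) := by
  choose F hFdiv hFadj using fun t ↦ exists_fdiv_eq_comp_rho (g := fun x ↦ f x t) hK
    fun x hx x' hx' h ↦ hcont x hx x' hx' h t
  have hcover : ∀ p ∈ Subdiv X K, rho K (fun t ↦ F t p) = f (rho K p) :=
    fun p hp ↦ funext fun t ↦ hFdiv t p hp
  refine ⟨fun p t ↦ F t p, fun p hp ↦ ?_, fun p hp q hq hpq t ↦ hFadj t p hp q hq hpq, hcover⟩
  change rho K _ ∈ Y
  rw [hcover p hp]
  exact hmaps _ hp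

/-- any continuous map `f : X → Y` of digital images with `X ⊆ ℤ²`
admits a continuous cover `f̂ : S(X,2k+1) → S(Y,2k+1)` with
`ρ_{2k+1} ∘ f̂ = f ∘ ρ_{2k+1}`. -/
theorem twoD_cover_exists {n : ℕ} (X : Set (Fin 2 → ℤ)) (Y : Set (Fin n → ℤ))
    (hX : X.Finite) (hY : Y.Finite) (k : ℤ) (hk : 1 ≤ k)
    (f : (Fin 2 → ℤ) → Fin n → ℤ)
    (hmaps : ∀ x ∈ X, f x ∈ Y)
    (hcont : ∀ x ∈ X, ∀ x' ∈ X, adj x x' → adj (f x) (f x')) :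
    ∃ fhat : (Fin 2 → ℤ) → Fin n → ℤ,
      (∀ p ∈ Subdiv X (2 * k + 1), fhat p ∈ Subdiv Y (2 * k + 1)) ∧
      (∀ p ∈ Subdiv X (2 * k + 1), ∀ p' ∈ Subdiv X (2 * k + 1),
        adj p p' → adj (fhat p) (fhat p')) ∧
      (∀ p ∈ Subdiv X (2 * k + 1), rho (2 * k + 1) (fhat p) = f (rho (2 * k + 1) p)) := by
  exact twoD_cover_exists_general (by lia) hmaps hcont
end
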